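/- arXiv:2602.08399 — 5 statements merged into one kernel-verified Lean document; each statement's English description precedes it below -/
import Mathlib

section
/- Let (P,Q) be a multipoint Padé pair of type (n,n) for the data (a_j, f_j). Then for every polynomial p with complex coefficients and deg p ≤ n−1, one has ∑_{j=0}^{2n} Q(a_j)·p(a_j)·f_j / ω'(a_j) = 0. -/
open Polynomial Finset

/-!
Lagrange interpolation at the zeros of `ω` expresses the coefficient of `z ^ (deg ω - 1)` in a
polynomial `R` with `deg R < deg ω` as `∑ R(a j) / ω'(a j)`, so this sum vanishes as soon as
`deg R < deg ω - 1`. At the nodes `Q p f` takes the same values as `R = P p`, whose degree is at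
most `2 n - 1`, while `deg ω = 2 n + 1`.
-/

section Nodal

variable {F ι : Type*} [Field F] {s : Finset ι} {v : ι → F}

theorem sum_eval_div_eval_derivative_nodal_eq_coeff (hv : Set.InjOn v s) {R : F[X]}
    (hR : R.degree < #s) :
    ∑ i ∈ s, R.eval (v i) / (derivative (Lagrange.nodal s v)).eval (v i) = R.coeff (#s - 1) := by
  classical
  rw [Lagrange.coeff_eq_sum hv hR]
  refine sum_congr rfl fun i hi => ?_
  rw [Lagrange.eval_nodal_derivative_eval_node_eq hi, Lagrange.eval_nodal]

theorem sum_eval_div_eval_derivative_nodal_eq_zero (hv : Set.InjOn v s) {R : F[X]}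
    (hR : R.degree + 1 < #s) :
    ∑ i ∈ s, R.eval (v i) / (derivative (Lagrange.nodal s v)).eval (v i) = 0 := by
  rcases eq_or_ne R 0 with rfl | hR0
  · simp
  have hlt : R.natDegree + 1 < #s := by
    rw [degree_eq_natDegree hR0] at hR
    exact_mod_cast hR
  rw [sum_eval_div_eval_derivative_nodal_eq_coeff hv
      (degree_le_natDegree.trans_lt (by exact_mod_cast Nat.lt_of_succ_lt hlt)),
    coeff_eq_zero_of_natDegree_lt (Nat.lt_sub_of_add_lt hlt)]

theorem discrete_orthogonality_general (hv : Set.InjOn v s) {f : ι → F} {P Q p : F[X]}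
    (hinterp : ∀ i ∈ s, Q.eval (v i) * f i = P.eval (v i))
    (hdeg : P.degree + p.degree + 1 < #s) :
    ∑ i ∈ s, Q.eval (v i) * p.eval (v i) * f i /
      (derivative (Lagrange.nodal s v)).eval (v i) = 0 := by
  rw [← degree_mul] at hdeg
  rw [← sum_eval_div_eval_derivative_nodal_eq_zero hv hdeg]
  refine sum_congr rfl fun i hi => ?_
  rw [eval_mul, ← hinterp i hi, mul_right_comm]

end Nodal

/-- **Discrete orthogonality for multipoint Padé pairs.**
Let `n ≥ 1`, let `a 0, …, a (2n)` be distinct complex numbers, `f j ∈ ℂ` given values,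
and `ω(z) = ∏_{j}(z - a j)`.  If `(P, Q)` is a multipoint Padé pair of type `(n,n)`
(i.e. `deg P ≤ n`, `deg Q ≤ n`, `Q ≠ 0`, and `Q(a j)·f j - P(a j) = 0` for all `j`),
then for every polynomial `p` with `deg p ≤ n - 1` one has
`∑_{j=0}^{2n} Q(a j)·p(a j)·f j / ω'(a j) = 0`. -/
theorem discrete_orthogonality
    (n : ℕ) (hn : 1 ≤ n)
    (a : Fin (2 * n + 1) → ℂ) (ha : Function.Injective a)
    (f : Fin (2 * n + 1) → ℂ)
    (ω : Polynomial ℂ) (hω : ω = ∏ j : Fin (2 * n + 1), (X - C (a j)))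
    (P Q : Polynomial ℂ)
    (hP : P.degree ≤ n) (hQ : Q.degree ≤ n) (hQ0 : Q ≠ 0)
    (hinterp : ∀ j, Q.eval (a j) * f j - P.eval (a j) = 0)
    (p : Polynomial ℂ) (hp : p.degree ≤ ((n - 1 : ℕ) : WithBot ℕ)) :
    ∑ j : Fin (2 * n + 1),
      Q.eval (a j) * p.eval (a j) * f j / (Polynomial.derivative ω).eval (a j) = 0 := by
  have hdeg : P.degree + p.degree + 1 < #(univ : Finset (Fin (2 * n + 1))) := by
    grw [hP, hp]
    rw [card_fin]
    norm_cast
    lia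
  rw [hω, ← Lagrange.nodal_eq]
  exact discrete_orthogonality_general ha.injOn (fun j _ => sub_eq_zero.mp (hinterp j)) hdeg
end

section
/- The pole Riemann–Hilbert problem has at most one solution: if Y and Ỹ are both solutions (for the same n, nodes a_j and weights w_j), then Y(z) = Ỹ(z) for all z ∈ ℂ ∖ {a_0,…,a_{2n}}. -/
open Filter Topology

/-- A solution of the pole Riemann–Hilbert problem with nodes `a j` and weights `w j`:
a `2×2` matrix-valued function `Y`, holomorphic entrywise off the nodes, whose first
column extends holomorphically across each node (with values `v i`), whose second column
has at most a simple pole at each node `a j` with residue `w j` times the value of the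
first column there, and normalized at infinity by
`Y₁₁ z⁻ⁿ → 1`, `Y₂₂ zⁿ → 1`, `Y₂₁ z⁻ⁿ → 0`, `Y₁₂ zⁿ → 0`. -/
structure IsPoleRHPSolution (n : ℕ) (a w : Fin (2 * n + 1) → ℂ)
    (Y : ℂ → Matrix (Fin 2) (Fin 2) ℂ) : Prop where
  hol : ∀ i k : Fin 2, DifferentiableOn ℂ (fun z => Y z i k) {z | ∀ j, z ≠ a j}
  residue : ∀ j : Fin (2 * n + 1), ∃ v : Fin 2 → ℂ,
    (∀ i : Fin 2, ∃ (F : ℂ → ℂ) (U : Set ℂ), IsOpen U ∧ a j ∈ U ∧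
      DifferentiableOn ℂ F U ∧ F (a j) = v i ∧
      ∀ z ∈ U, z ≠ a j → F z = Y z i 0) ∧
    (∀ i : Fin 2, ∃ (G : ℂ → ℂ) (U : Set ℂ), IsOpen U ∧ a j ∈ U ∧
      DifferentiableOn ℂ G U ∧
      ∀ z ∈ U, z ≠ a j → G z = Y z i 1 - w j * v i / (z - a j))
  inf11 : Tendsto (fun z : ℂ => Y z 0 0 / z ^ n) (Bornology.cobounded ℂ) (𝓝 1)
  inf22 : Tendsto (fun z : ℂ => Y z 1 1 * z ^ n) (Bornology.cobounded ℂ) (𝓝 1)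
  inf21 : Tendsto (fun z : ℂ => Y z 1 0 / z ^ n) (Bornology.cobounded ℂ) (𝓝 0)
  inf12 : Tendsto (fun z : ℂ => Y z 0 1 * z ^ n) (Bornology.cobounded ℂ) (𝓝 0)

/-!
The residue condition at a node `a` with weight `w` says that near `a` a solution is `E * T` with
`E` analytic at `a` and `T = !![1, w / (z - a); 0, 1]`, a factor of determinant one shared by all
solutions. In `Y * adjugate X` this factor cancels, so the product of two solutions extends to an
entire function. The normalization at infinity also amounts to multiplication by a common matrix of
determinant one, so this function tends to `1` and Liouville's theorem gives `Y * adjugate X = 1`.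
The same identity for the pair `X`, `X` then yields `Y = X`.
-/

lemma tendsto_cocompact_of_eventuallyEq_nhdsNE {α β : Type*} [TopologicalSpace α] [T2Space α]
    [∀ z : α, (𝓝[≠] z).NeBot] [TopologicalSpace β] [RegularSpace β] {f g : α → β} {c : β}
    (hg : Continuous g) (hfg : ∀ z, f =ᶠ[𝓝[≠] z] g) (hf : Tendsto f (cocompact α) (𝓝 c)) :
    Tendsto g (cocompact α) (𝓝 c) := by
  refine (closed_nhds_basis c).tendsto_right_iff.2 fun V ⟨hV, hVclosed⟩ => ?_
  obtain ⟨K, hK, hKV⟩ := hasBasis_cocompact.eventually_iff.1 (hf hV)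
  refine hasBasis_cocompact.eventually_iff.2 ⟨K, hK, fun z hz => ?_⟩
  have hfV : ∀ᶠ y in 𝓝[≠] z, f y ∈ V :=
    nhdsWithin_le_nhds (mem_of_superset (hK.isClosed.isOpen_compl.mem_nhds hz) hKV)
  have hgV : ∀ᶠ y in 𝓝[≠] z, g y ∈ V :=
    hfV.congr ((hfg z).mono fun y hy => by rw [hy])
  exact hVclosed.mem_of_tendsto (hg.continuousAt.mono_left nhdsWithin_le_nhds) hgV

theorem apply_eq_of_tendsto_cobounded_of_removable {E : Type*} [NormedAddCommGroup E]
    [NormedSpace ℂ E] {f : ℂ → E} {c : E}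
    (hf : ∀ z₀, ∃ h : ℂ → E, AnalyticAt ℂ h z₀ ∧ f =ᶠ[𝓝[≠] z₀] h)
    (hc : Tendsto f (Bornology.cobounded ℂ) (𝓝 c)) {z : ℂ} (hz : ContinuousAt f z) : f z = c := by
  have hmero : MeromorphicOn f Set.univ := fun z₀ _ =>
    let ⟨_, hh, hfh⟩ := hf z₀
    hh.meromorphicAt.congr hfh.symm
  set g := toMeromorphicNFOn f Set.univ
  have hfg : ∀ z₀, f =ᶠ[𝓝[≠] z₀] g := fun z₀ =>
    (hmero.toMeromorphicNFOn_eq_self_on_nhdsNE (Set.mem_univ z₀)).symm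
  have hg : Differentiable ℂ g := fun z₀ => by
    obtain ⟨h, hh, hfh⟩ := hf z₀
    have hord : 0 ≤ meromorphicOrderAt g z₀ := by
      rw [← meromorphicOrderAt_congr (hfg z₀), meromorphicOrderAt_congr hfh]
      exact hh.meromorphicOrderAt_nonneg
    have hNF : MeromorphicNFAt g z₀ := meromorphicNFOn_toMeromorphicNFOn f _ (Set.mem_univ z₀)
    exact (hNF.meromorphicOrderAt_nonneg_iff_analyticAt.1 hord).differentiableAt
  have hgc : Tendsto g (cocompact ℂ) (𝓝 c) := by
    rw [Metric.cobounded_eq_cocompact] at hc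
    exact tendsto_cocompact_of_eventuallyEq_nhdsNE hg.continuous hfg hc
  have hfgz : f z = g z :=
    ((hz.eventuallyEq_nhds_iff_eventuallyEq_nhdsNE hg.continuous.continuousAt).1 (hfg z)).eq_of_nhds
  rw [hfgz, hg.apply_eq_of_tendsto_cocompact z hgc]

section MatrixFunctions

lemma analyticAt_mul_apply {ι 𝕜 : Type*} [Fintype ι] [NontriviallyNormedField 𝕜]
    {A B : 𝕜 → Matrix ι ι 𝕜} {z₀ : 𝕜}
    (hA : ∀ i k, AnalyticAt 𝕜 (fun z => A z i k) z₀)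
    (hB : ∀ i k, AnalyticAt 𝕜 (fun z => B z i k) z₀) (i k : ι) :
    AnalyticAt 𝕜 (fun z => (A z * B z) i k) z₀ := by
  simp only [Matrix.mul_apply]
  exact Finset.univ.analyticAt_fun_sum fun j _ => (hA i j).mul (hB j k)

variable {ι : Type*} [Fintype ι] [DecidableEq ι]

lemma mul_mul_adjugate_mul_of_det_eq_one {R : Type*} [CommRing R] {A B T : Matrix ι ι R}
    (hT : T.det = 1) : (A * T) * (B * T).adjugate = A * B.adjugate := by
  rw [Matrix.adjugate_mul_distrib, Matrix.mul_assoc, ← Matrix.mul_assoc T, Matrix.mul_adjugate, hT,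
    one_smul, Matrix.one_mul]

lemma tendsto_mul_adjugate_of_tendsto_mul {α R : Type*} [CommRing R] [TopologicalSpace R]
    [IsTopologicalRing R] {l : Filter α} {X Y D : α → Matrix ι ι R} {P Q : Matrix ι ι R}
    (hD : ∀ᶠ z in l, (D z).det = 1) (hX : Tendsto (fun z => X z * D z) l (𝓝 P))
    (hY : Tendsto (fun z => Y z * D z) l (𝓝 Q)) :
    Tendsto (fun z => X z * (Y z).adjugate) l (𝓝 (P * Q.adjugate)) := by
  have hadj : Continuous (Matrix.adjugate : Matrix ι ι R → Matrix ι ι R) :=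
    continuous_id.matrix_adjugate
  refine (hX.mul ((hadj.tendsto Q).comp hY)).congr' ?_
  filter_upwards [hD] with z hz using mul_mul_adjugate_mul_of_det_eq_one hz

variable {𝕜 : Type*} [NontriviallyNormedField 𝕜] {A : 𝕜 → Matrix ι ι 𝕜} {z₀ : 𝕜}

lemma analyticAt_det (hA : ∀ i k, AnalyticAt 𝕜 (fun z => A z i k) z₀) :
    AnalyticAt 𝕜 (fun z => (A z).det) z₀ := by
  simp only [Matrix.det_apply']
  exact Finset.univ.analyticAt_fun_sum fun σ _ =>
    analyticAt_const.mul (Finset.univ.analyticAt_fun_prod fun i _ => hA (σ i) i)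

lemma analyticAt_adjugate_apply (hA : ∀ i k, AnalyticAt 𝕜 (fun z => A z i k) z₀) (i k : ι) :
    AnalyticAt 𝕜 (fun z => (A z).adjugate i k) z₀ := by
  simp only [Matrix.adjugate_apply]
  refine analyticAt_det fun p q => ?_
  obtain rfl | hp := eq_or_ne p k
  · simpa using analyticAt_const
  · simpa [Matrix.updateRow_ne hp] using hA p q

end MatrixFunctions

section UnimodularFactors

variable {ι : Type*} [Fintype ι] [DecidableEq ι] {X Y T D : ℂ → Matrix ι ι ℂ} {z₀ z : ℂ}

/-- Near `z₀`, the matrix function `Y` is an analytic matrix times `T`, so that `T` carries the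
singularity of `Y`. The factorization is required only off `z₀`, and analyticity is entrywise. -/
def IsAnalyticMulAt (Y T : ℂ → Matrix ι ι ℂ) (z₀ : ℂ) : Prop :=
  ∃ E : ℂ → Matrix ι ι ℂ, (∀ i k, AnalyticAt ℂ (fun z => E z i k) z₀) ∧
    Y =ᶠ[𝓝[≠] z₀] fun z => E z * T z

lemma IsAnalyticMulAt.exists_analyticAt_mul_adjugate (hY : IsAnalyticMulAt Y T z₀)
    (hX : IsAnalyticMulAt X T z₀) (hT : ∀ z, (T z).det = 1) (i k : ι) :
    ∃ h : ℂ → ℂ, AnalyticAt ℂ h z₀ ∧ (fun z => (Y z * (X z).adjugate) i k) =ᶠ[𝓝[≠] z₀] h := by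
  obtain ⟨E, hE, hYE⟩ := hY
  obtain ⟨F, hF, hXF⟩ := hX
  refine ⟨fun z => (E z * (F z).adjugate) i k,
    analyticAt_mul_apply hE (analyticAt_adjugate_apply hF) i k, ?_⟩
  filter_upwards [hYE, hXF] with z hYz hXz
  rw [hYz, hXz, mul_mul_adjugate_mul_of_det_eq_one (hT z)]

theorem mul_adjugate_eq_one_of_common_factors
    (hT : ∀ z₀, ∃ T : ℂ → Matrix ι ι ℂ, (∀ z, (T z).det = 1) ∧
      IsAnalyticMulAt Y T z₀ ∧ IsAnalyticMulAt X T z₀)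
    (hD : ∀ᶠ z in Bornology.cobounded ℂ, (D z).det = 1)
    (hYD : Tendsto (fun z => Y z * D z) (Bornology.cobounded ℂ) (𝓝 1))
    (hXD : Tendsto (fun z => X z * D z) (Bornology.cobounded ℂ) (𝓝 1))
    (hYz : ContinuousAt Y z) (hXz : ContinuousAt X z) : Y z * (X z).adjugate = 1 := by
  have hlim : Tendsto (fun z => Y z * (X z).adjugate) (Bornology.cobounded ℂ) (𝓝 1) := by
    simpa using tendsto_mul_adjugate_of_tendsto_mul hD hYD hXD
  have hcont : ContinuousAt (fun z => Y z * (X z).adjugate) z :=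
    hYz.mul (continuous_id.matrix_adjugate.continuousAt.comp hXz)
  ext i k
  have happly : Continuous fun M : Matrix ι ι ℂ => M i k := continuous_id.matrix_elem i k
  refine apply_eq_of_tendsto_cobounded_of_removable
    (f := fun z => (Y z * (X z).adjugate) i k) (fun z₀ => ?_)
    ((happly.tendsto 1).comp hlim) (happly.continuousAt.comp hcont)
  obtain ⟨T, hdet, hYT, hXT⟩ := hT z₀
  exact hYT.exists_analyticAt_mul_adjugate hXT hdet i k

theorem eq_of_common_factors
    (hT : ∀ z₀, ∃ T : ℂ → Matrix ι ι ℂ, (∀ z, (T z).det = 1) ∧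
      IsAnalyticMulAt Y T z₀ ∧ IsAnalyticMulAt X T z₀)
    (hD : ∀ᶠ z in Bornology.cobounded ℂ, (D z).det = 1)
    (hYD : Tendsto (fun z => Y z * D z) (Bornology.cobounded ℂ) (𝓝 1))
    (hXD : Tendsto (fun z => X z * D z) (Bornology.cobounded ℂ) (𝓝 1))
    (hYz : ContinuousAt Y z) (hXz : ContinuousAt X z) : Y z = X z := by
  have hYX : Y z * (X z).adjugate = 1 :=
    mul_adjugate_eq_one_of_common_factors hT hD hYD hXD hYz hXz
  have hXX : X z * (X z).adjugate = 1 :=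
    mul_adjugate_eq_one_of_common_factors
      (fun z₀ => (hT z₀).imp fun _ h => ⟨h.1, h.2.2, h.2.2⟩) hD hXD hXD hXz hXz
  exact left_inv_eq_right_inv hYX (mul_eq_one_comm.1 hXX)

end UnimodularFactors

lemma analyticAt_dslope {𝕜 E : Type*} [NontriviallyNormedField 𝕜] [NormedAddCommGroup E]
    [NormedSpace 𝕜 E] {f : 𝕜 → E} {z₀ : 𝕜} (hf : AnalyticAt 𝕜 f z₀) :
    AnalyticAt 𝕜 (dslope f z₀) z₀ :=
  let ⟨_, hp⟩ := hf
  hp.has_fpower_series_dslope_fslope.analyticAt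

/-- The common singular factor of all solutions at a node `a` with weight `w`. At `z = a` the entry
`w / (z - a)` is `0`, so the determinant is one there as well. -/
noncomputable def poleFactor (a w z : ℂ) : Matrix (Fin 2) (Fin 2) ℂ :=
  !![1, w / (z - a); 0, 1]

lemma det_poleFactor (a w z : ℂ) : (poleFactor a w z).det = 1 := by
  simp [poleFactor, Matrix.det_fin_two]

/-- The common factor `diag (z⁻ⁿ, zⁿ)` that normalizes solutions at infinity. -/
noncomputable def normalizingFactor (n : ℕ) (z : ℂ) : Matrix (Fin 2) (Fin 2) ℂ :=
  Matrix.diagonal ![(z ^ n)⁻¹, z ^ n]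

lemma det_normalizingFactor (n : ℕ) {z : ℂ} (hz : z ≠ 0) : (normalizingFactor n z).det = 1 := by
  simp [normalizingFactor, hz]

namespace IsPoleRHPSolution

variable {n : ℕ} {a w : Fin (2 * n + 1) → ℂ} {X Y : ℂ → Matrix (Fin 2) (Fin 2) ℂ} {z : ℂ}

lemma analyticAt_apply (hY : IsPoleRHPSolution n a w Y) (hz : ∀ j, z ≠ a j) (i k : Fin 2) :
    AnalyticAt ℂ (fun z => Y z i k) z := by
  have hopen : IsOpen {z | ∀ j, z ≠ a j} := by
    simpa only [Set.ofPred_forall] using isOpen_iInter_of_finite fun j => isOpen_ne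
  exact (hY.hol i k).analyticAt (hopen.mem_nhds hz)

lemma continuousAt (hY : IsPoleRHPSolution n a w Y) (hz : ∀ j, z ≠ a j) : ContinuousAt Y z :=
  continuousAt_pi.2 fun i => continuousAt_pi.2 fun k => (hY.analyticAt_apply hz i k).continuousAt

lemma isAnalyticMulAt_one (hY : IsPoleRHPSolution n a w Y) (hz : ∀ j, z ≠ a j) :
    IsAnalyticMulAt Y (fun _ => 1) z :=
  ⟨Y, hY.analyticAt_apply hz, by simp⟩

lemma exists_analyticAt_row (hY : IsPoleRHPSolution n a w Y) (j : Fin (2 * n + 1)) (i : Fin 2) :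
    ∃ F G : ℂ → ℂ, AnalyticAt ℂ F (a j) ∧ AnalyticAt ℂ G (a j) ∧
      (∀ᶠ z in 𝓝[≠] a j, Y z i 0 = F z) ∧
      ∀ᶠ z in 𝓝[≠] a j, Y z i 1 = G z + w j * F (a j) / (z - a j) := by
  obtain ⟨v, hfst, hsnd⟩ := hY.residue j
  obtain ⟨F, U, hU, haU, hF, hFv, hFY⟩ := hfst i
  obtain ⟨G, V, hV, haV, hG, hGY⟩ := hsnd i
  refine ⟨F, G, hF.analyticAt (hU.mem_nhds haU), hG.analyticAt (hV.mem_nhds haV), ?_, ?_⟩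
  · exact eventually_nhdsWithin_iff.2 (eventually_of_mem (hU.mem_nhds haU)
      fun z hz hza => (hFY z hz hza).symm)
  · refine eventually_nhdsWithin_iff.2 (eventually_of_mem (hV.mem_nhds haV) fun z hz hza => ?_)
    rw [hGY z hz hza, hFv, sub_add_cancel]

lemma isAnalyticMulAt_poleFactor (hY : IsPoleRHPSolution n a w Y) (j : Fin (2 * n + 1)) :
    IsAnalyticMulAt Y (poleFactor (a j) (w j)) (a j) := by
  choose F G hF hG hYF hYG using hY.exists_analyticAt_row j
  -- Replacing the residue `w * F a` by `w * F z` changes the second column by `w * dslope F a z`.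
  refine ⟨fun z => Matrix.of fun i => ![F i z, G i z - w j * dslope (F i) (a j) z],
    fun i k => ?_, ?_⟩
  · fin_cases k
    · exact hF i
    · exact (hG i).sub (analyticAt_const.mul (analyticAt_dslope (hF i)))
  · filter_upwards [eventually_all.2 hYF, eventually_all.2 hYG, self_mem_nhdsWithin]
      with z hYFz hYGz hz
    have hza : z - a j ≠ 0 := sub_ne_zero.2 hz
    ext i k
    fin_cases k
    · simp [poleFactor, Matrix.mul_apply, hYFz]
    · simp only [poleFactor, Matrix.mul_apply, Matrix.of_apply, Matrix.cons_val',
        Matrix.cons_val_zero, Matrix.cons_val_one, Matrix.cons_val_fin_one, Fin.sum_univ_two,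
        Fin.mk_one, Fin.isValue, mul_one, hYGz, dslope_of_ne _ hz, slope_def_field]
      field_simp
      ring

lemma exists_common_factor (hY : IsPoleRHPSolution n a w Y) (hX : IsPoleRHPSolution n a w X)
    (z₀ : ℂ) : ∃ T : ℂ → Matrix (Fin 2) (Fin 2) ℂ, (∀ z, (T z).det = 1) ∧
      IsAnalyticMulAt Y T z₀ ∧ IsAnalyticMulAt X T z₀ := by
  by_cases hz₀ : ∀ j, z₀ ≠ a j
  · exact ⟨fun _ => 1, fun _ => Matrix.det_one, hY.isAnalyticMulAt_one hz₀,
      hX.isAnalyticMulAt_one hz₀⟩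
  · push Not at hz₀
    obtain ⟨j, rfl⟩ := hz₀
    exact ⟨poleFactor (a j) (w j), det_poleFactor (a j) (w j), hY.isAnalyticMulAt_poleFactor j,
      hX.isAnalyticMulAt_poleFactor j⟩

lemma tendsto_mul_normalizingFactor (hY : IsPoleRHPSolution n a w Y) :
    Tendsto (fun z => Y z * normalizingFactor n z) (Bornology.cobounded ℂ) (𝓝 1) := by
  refine tendsto_pi_nhds.2 fun i => tendsto_pi_nhds.2 fun k => ?_
  simp only [normalizingFactor, Matrix.mul_diagonal]
  fin_cases i <;> fin_cases k
  · simpa [div_eq_mul_inv] using hY.inf11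
  · simpa using hY.inf12
  · simpa [div_eq_mul_inv] using hY.inf21
  · simpa using hY.inf22

end IsPoleRHPSolution

/-- **Uniqueness for the pole Riemann–Hilbert problem.**
If `Y` and `Ỹ` are both solutions of the pole Riemann–Hilbert problem for the same `n`,
distinct nodes `a j` and weights `w j`, then `Y z = Ỹ z` for all `z ∈ ℂ ∖ {a 0, …, a (2n)}`. -/
theorem poleRHP_uniqueness
    (n : ℕ) (hn : 1 ≤ n)
    (a : Fin (2 * n + 1) → ℂ) (ha : Function.Injective a)
    (w : Fin (2 * n + 1) → ℂ)
    (Y Ytilde : ℂ → Matrix (Fin 2) (Fin 2) ℂ)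
    (hY : IsPoleRHPSolution n a w Y) (hYt : IsPoleRHPSolution n a w Ytilde) :
    ∀ z : ℂ, (∀ j, z ≠ a j) → Y z = Ytilde z := by
  intro z hz
  have hdet : ∀ᶠ z in Bornology.cobounded ℂ, (normalizingFactor n z).det = 1 :=
    (Bornology.eventually_ne_cobounded 0).mono fun _ => det_normalizingFactor n
  exact eq_of_common_factors (hY.exists_common_factor hYt) hdet hY.tendsto_mul_normalizingFactor
    hYt.tendsto_mul_normalizingFactor (hY.continuousAt hz) (hYt.continuousAt hz)
end

section
/- Set ω_n(z) = ∏_{k=0}^{2n}(z − a_{n,k}), so that ω_n'(a_{n,j}) = ∏_{k≠j}(a_{n,j} − a_{n,k}). Then there exists C > 0, depending only on κ, A, B, such that for all n ≥ 2 and all j = 0,1,…,2n: | log|ω_n'(a_{n,j})| − 2n·log n − n·∫_A^B log|α_{n,j} − t|·κ(t) dt | ≤ C·log n. -/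
open Finset

/-!
Let `ρ = n κ`, so that consecutive nodes `x_k = α_{n,k}` cut off cells of `ρ`-mass one. Seen from a
fixed node `x_j`, the integral of `log |x_j - t|` against `ρ` over a cell lies between the values
of the logarithm at the two ends of the cell. On either side of `x_j`, the sum of the
logarithms at the far ends therefore dominates the integral, and the excess telescopes to at most
the last logarithm minus the integral over the cell adjacent to `x_j`. If `ρ ≤ M`, that integral is
smallest when the unit mass sits with density `M` on an interval of length `1 / M` at `x_j`, which
gives `-(1 + log M)`; here `M` grows linearly in `n`.
-/

open MeasureTheory

theorem sum_range_succ_erase_eq_add {E : Type*} [AddCommMonoid E] (f : ℕ → E) {j N : ℕ}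
    (hj : j ≤ N) :
    ∑ k ∈ (range (N + 1)).erase j, f k =
      ∑ i ∈ range j, f (j - (i + 1)) + ∑ i ∈ range (N - j), f (j + (i + 1)) := by
  have hunion : (range (N + 1)).erase j = range j ∪ Ico (j + 1) (N + 1) := by
    ext k
    simp only [mem_erase, mem_range, mem_union, mem_Ico]
    omega
  have hdisj : Disjoint (range j) (Ico (j + 1) (N + 1)) := by
    rw [range_eq_Ico]
    exact Ico_disjoint_Ico_consecutive 0 (j + 1) (N + 1) |>.mono_left
      (Ico_subset_Ico_right j.le_succ)
  rw [hunion, sum_union hdisj, ← sum_range_reflect, sum_Ico_eq_sum_range, Nat.add_sub_add_right]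
  simp only [Nat.sub_sub, add_comm 1, add_assoc]

theorem log_abs_prod_const_mul {ι : Type*} (s : Finset ι) {f : ι → ℝ} {c : ℝ} (hc : c ≠ 0)
    (hf : ∀ i ∈ s, f i ≠ 0) :
    Real.log |∏ i ∈ s, c * f i| = #s * Real.log c + ∑ i ∈ s, Real.log |f i| := by
  rw [Real.log_abs, Real.log_prod fun i hi => mul_ne_zero hc (hf i hi),
    ← nsmul_eq_mul, ← sum_const, ← sum_add_distrib]
  exact sum_congr rfl fun i hi => by rw [Real.log_mul hc (hf i hi), Real.log_abs]

theorem integral_log_sub_log_self (δ : ℝ) :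
    ∫ t in 0..δ, (Real.log t - Real.log δ) = -δ := by
  rw [intervalIntegral.integral_sub intervalIntegral.intervalIntegrable_log'
    intervalIntegrable_const, integral_log, intervalIntegral.integral_const, smul_eq_mul]
  ring

theorem intervalIntegrable_log_abs_const_sub (x a b : ℝ) :
    IntervalIntegrable (fun t => Real.log |x - t|) volume a b := by
  simpa only [Real.log_abs, sub_sub_cancel] using
    (intervalIntegral.intervalIntegrable_log' (a := x - a) (b := x - b)).comp_sub_left x

/-- `ρ` is an integrable density on the interval `[a, b]` with values between `0` and `M`. No
continuity is asked for, and the total mass is arbitrary. -/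
structure IsBoundedDensity (ρ : ℝ → ℝ) (M a b : ℝ) : Prop where
  le : a ≤ b
  intervalIntegrable : IntervalIntegrable ρ volume a b
  mem_Icc : ∀ t ∈ Set.Icc a b, ρ t ∈ Set.Icc 0 M

theorem exists_isBoundedDensity_of_continuousOn {κ : ℝ → ℝ} {A B : ℝ} (hAB : A ≤ B)
    (hcont : ContinuousOn κ (Set.Icc A B)) (hnonneg : ∀ t ∈ Set.Icc A B, 0 ≤ κ t) :
    ∃ M, IsBoundedDensity κ M A B :=
  have ⟨M, hM⟩ := isCompact_Icc.exists_bound_of_continuousOn hcont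
  ⟨M, hAB, hcont.intervalIntegrable_of_Icc hAB, fun t ht =>
    ⟨hnonneg t ht, (Real.le_norm_self _).trans (hM t ht)⟩⟩

namespace IsBoundedDensity

variable {ρ f : ℝ → ℝ} {M a b c d C : ℝ}

theorem mono (hρ : IsBoundedDensity ρ M a b) (hac : a ≤ c) (hcd : c ≤ d) (hdb : d ≤ b) :
    IsBoundedDensity ρ M c d where
  le := hcd
  intervalIntegrable := hρ.intervalIntegrable.mono_set <| by
    rw [Set.uIcc_of_le hcd, Set.uIcc_of_le hρ.le]
    exact Set.Icc_subset_Icc hac hdb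
  mem_Icc t ht := hρ.mem_Icc t ⟨hac.trans ht.1, ht.2.trans hdb⟩

theorem const_mul (hρ : IsBoundedDensity ρ M a b) (hc : 0 ≤ c) :
    IsBoundedDensity (fun t => c * ρ t) (c * M) a b where
  le := hρ.le
  intervalIntegrable := hρ.intervalIntegrable.const_mul c
  mem_Icc t ht := ⟨mul_nonneg hc (hρ.mem_Icc t ht).1, by gcongr; exact (hρ.mem_Icc t ht).2⟩

theorem comp_const_add (hρ : IsBoundedDensity ρ M a b) (c : ℝ) :
    IsBoundedDensity (fun s => ρ (c + s)) M (a - c) (b - c) where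
  le := sub_le_sub_right hρ.le c
  intervalIntegrable := hρ.intervalIntegrable.comp_add_left c
  mem_Icc s hs := hρ.mem_Icc _ ⟨by linarith [hs.1], by linarith [hs.2]⟩

theorem comp_const_sub (hρ : IsBoundedDensity ρ M a b) (c : ℝ) :
    IsBoundedDensity (fun s => ρ (c - s)) M (c - b) (c - a) where
  le := sub_le_sub_left hρ.le c
  intervalIntegrable := (hρ.intervalIntegrable.comp_sub_left c).symm
  mem_Icc s hs := hρ.mem_Icc _ ⟨by linarith [hs.2], by linarith [hs.1]⟩

theorem integral_nonneg (hρ : IsBoundedDensity ρ M a b) : 0 ≤ ∫ t in a..b, ρ t :=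
  intervalIntegral.integral_nonneg hρ.le fun t ht => (hρ.mem_Icc t ht).1

theorem integral_le (hρ : IsBoundedDensity ρ M a b) : ∫ t in a..b, ρ t ≤ M * (b - a) :=
  calc ∫ t in a..b, ρ t ≤ ∫ _ in a..b, M :=
        intervalIntegral.integral_mono_on hρ.le hρ.intervalIntegrable
          intervalIntegrable_const fun t ht => (hρ.mem_Icc t ht).2
    _ = M * (b - a) := by rw [intervalIntegral.integral_const, smul_eq_mul, mul_comm]

theorem intervalIntegrable_mul (hρ : IsBoundedDensity ρ M a b)
    (hf : IntervalIntegrable f volume a b) :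
    IntervalIntegrable (fun t => f t * ρ t) volume a b := by
  have hbound : ∀ᵐ t ∂volume.restrict (Set.Ioc a b), ‖ρ t‖ ≤ M := by
    filter_upwards [ae_restrict_mem measurableSet_Ioc] with t ht
    obtain ⟨h_nonneg, h_le⟩ := hρ.mem_Icc t (Set.Ioc_subset_Icc_self ht)
    rwa [Real.norm_of_nonneg h_nonneg]
  rw [intervalIntegrable_iff_integrableOn_Ioc_of_le hρ.le] at hf ⊢
  exact hf.mul_bdd hρ.intervalIntegrable.aestronglyMeasurable hbound

theorem integral_mul_le (hρ : IsBoundedDensity ρ M a b) (hf : IntervalIntegrable f volume a b)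
    (hC : ∀ t ∈ Set.Ioo a b, f t ≤ C) :
    ∫ t in a..b, f t * ρ t ≤ C * ∫ t in a..b, ρ t := by
  rw [← intervalIntegral.integral_const_mul]
  exact intervalIntegral.integral_mono_on_of_le_Ioo hρ.le (hρ.intervalIntegrable_mul hf)
    (hρ.intervalIntegrable.const_mul C) fun t ht =>
      mul_le_mul_of_nonneg_right (hC t ht) (hρ.mem_Icc t (Set.Ioo_subset_Icc_self ht)).1

theorem le_integral_mul (hρ : IsBoundedDensity ρ M a b) (hf : IntervalIntegrable f volume a b)
    (hC : ∀ t ∈ Set.Ioo a b, C ≤ f t) :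
    C * ∫ t in a..b, ρ t ≤ ∫ t in a..b, f t * ρ t := by
  have h := hρ.integral_mul_le hf.neg (C := -C) fun t ht => neg_le_neg (hC t ht)
  simpa only [Pi.neg_apply, neg_mul, intervalIntegral.integral_neg, neg_le_neg_iff] using h

theorem integral_mul_eq_zero (hρ : IsBoundedDensity ρ M a b) (h : ∫ t in a..b, ρ t = 0)
    (f : ℝ → ℝ) : ∫ t in a..b, f t * ρ t = 0 := by
  have hnonneg : 0 ≤ᵐ[volume.restrict (Set.Ioc a b)] ρ := by
    filter_upwards [ae_restrict_mem measurableSet_Ioc] with t ht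
    exact (hρ.mem_Icc t (Set.Ioc_subset_Icc_self ht)).1
  have hzero := (intervalIntegral.integral_eq_zero_iff_of_le_of_nonneg_ae hρ.le hnonneg
    hρ.intervalIntegrable).1 h
  rw [intervalIntegral.integral_of_le hρ.le]
  refine integral_eq_zero_of_ae ?_
  filter_upwards [hzero] with t ht
  simp only [ht, Pi.zero_apply, mul_zero]

theorem integral_mul_eq_of_integral_eq (hρ : IsBoundedDensity ρ M a b) (hac : a ≤ c) (hcd : c ≤ d)
    (hdb : d ≤ b) (h : ∫ t in c..d, ρ t = ∫ t in a..b, ρ t)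
    (hf : IntervalIntegrable f volume a b) :
    ∫ t in c..d, f t * ρ t = ∫ t in a..b, f t * ρ t := by
  have hac' := hρ.mono le_rfl hac (hcd.trans hdb)
  have hdb' := hρ.mono (hac.trans hcd) hdb le_rfl
  have hsplit {g : ℝ → ℝ} (hg : IntervalIntegrable g volume a b) :
      ∫ t in a..b, g t = (∫ t in a..c, g t) + (∫ t in c..d, g t) + ∫ t in d..b, g t := by
    have hsub {u v : ℝ} (hau : a ≤ u) (huv : u ≤ v) (hvb : v ≤ b) :
        IntervalIntegrable g volume u v :=
      hg.mono_set (Set.uIcc_subset_uIcc (Set.mem_uIcc_of_le hau (huv.trans hvb))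
        (Set.mem_uIcc_of_le (hau.trans huv) hvb))
    have hgac := hsub le_rfl hac (hcd.trans hdb)
    have hgcd := hsub hac hcd hdb
    rw [intervalIntegral.integral_add_adjacent_intervals hgac hgcd,
      intervalIntegral.integral_add_adjacent_intervals (hgac.trans hgcd)
        (hsub (hac.trans hcd) hdb le_rfl)]
  have hmass := hsplit hρ.intervalIntegrable
  have hac_nonneg := hac'.integral_nonneg
  have hdb_nonneg := hdb'.integral_nonneg
  rw [hsplit (hρ.intervalIntegrable_mul hf), hac'.integral_mul_eq_zero (by linarith),
    hdb'.integral_mul_eq_zero (by linarith), zero_add, add_zero]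

theorem neg_one_add_log_le_integral_log_mul (hρ : IsBoundedDensity ρ M 0 b)
    (hmass : ∫ t in 0..b, ρ t = 1) :
    -(1 + Real.log M) ≤ ∫ t in 0..b, Real.log t * ρ t := by
  have hMb : 1 ≤ M * b := by simpa only [hmass, sub_zero] using hρ.integral_le
  have hM : 0 < M := pos_of_mul_pos_left (one_pos.trans_le hMb) hρ.le
  have hδ : 0 < M⁻¹ := inv_pos.2 hM
  have hδb : M⁻¹ ≤ b := (inv_le_iff_one_le_mul₀' hM).2 hMb
  have hlog_int (u v : ℝ) :
      IntervalIntegrable (fun t => Real.log t - Real.log M⁻¹) volume u v :=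
    intervalIntegral.intervalIntegrable_log'.sub intervalIntegrable_const
  have hnear := hρ.mono le_rfl hδ.le hδb
  have hfar := hρ.mono hδ.le hδb le_rfl
  have hnear_ge : -1 ≤ ∫ t in 0..M⁻¹, (Real.log t - Real.log M⁻¹) * ρ t :=
    calc -1 = ∫ t in 0..M⁻¹, (Real.log t - Real.log M⁻¹) * M := by
          rw [intervalIntegral.integral_mul_const, integral_log_sub_log_self, neg_mul,
            inv_mul_cancel₀ hM.ne']
      _ ≤ _ := by
          refine intervalIntegral.integral_mono_on_of_le_Ioo hδ.le ((hlog_int _ _).mul_const M)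
            (hnear.intervalIntegrable_mul (hlog_int _ _)) fun t ht => ?_
          exact mul_le_mul_of_nonpos_left (hnear.mem_Icc t (Set.Ioo_subset_Icc_self ht)).2
            (sub_nonpos.2 (Real.log_le_log ht.1 ht.2.le))
  have hfar_nonneg : 0 ≤ ∫ t in M⁻¹..b, (Real.log t - Real.log M⁻¹) * ρ t := by
    simpa only [zero_mul] using hfar.le_integral_mul (C := 0) (hlog_int _ _)
      fun t ht => sub_nonneg.2 (Real.log_le_log hδ ht.1.le)
  have hsplit : ∫ t in 0..b, Real.log t * ρ t =
      (∫ t in 0..b, (Real.log t - Real.log M⁻¹) * ρ t) - Real.log M := by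
    simp only [sub_mul]
    rw [intervalIntegral.integral_sub
      (hρ.intervalIntegrable_mul intervalIntegral.intervalIntegrable_log')
      (hρ.intervalIntegrable.const_mul _), intervalIntegral.integral_const_mul, hmass, Real.log_inv]
    ring
  rw [hsplit, ← intervalIntegral.integral_add_adjacent_intervals
    (hnear.intervalIntegrable_mul (hlog_int _ _)) (hfar.intervalIntegrable_mul (hlog_int _ _))]
  linarith

end IsBoundedDensity

/-- The points `x 0 < x 1 < ⋯ < x N` bound `N` consecutive cells, each of mass one for the density
`ρ`. The values of `x` beyond `N` are irrelevant. -/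
structure IsUnitMassPartition (ρ : ℝ → ℝ) (x : ℕ → ℝ) (N : ℕ) : Prop where
  strictMonoOn : StrictMonoOn x (Set.Iic N)
  integral_eq_one : ∀ k < N, ∫ t in x k..x (k + 1), ρ t = 1

theorem IsBoundedDensity.isUnitMassPartition {ρ : ℝ → ℝ} {M a b : ℝ} {x : ℕ → ℝ} {N : ℕ}
    (hρ : IsBoundedDensity ρ M a b) (hx : ∀ k ≤ N, x k ∈ Set.Icc a b)
    (hmass : ∀ k ≤ N, ∫ t in a..x k, ρ t = k) : IsUnitMassPartition ρ x N := by
  have hint (k) (hk : k ≤ N) : IntervalIntegrable ρ volume a (x k) :=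
    (hρ.mono le_rfl (hx k hk).1 (hx k hk).2).intervalIntegrable
  have hbetween (k l) (hk : k ≤ N) (hl : l ≤ N) : ∫ t in x k..x l, ρ t = (l : ℝ) - k := by
    rw [← intervalIntegral.integral_interval_sub_left (hint l hl) (hint k hk), hmass l hl,
      hmass k hk]
  refine ⟨fun k hk l hl hkl => lt_of_not_ge fun hle => ?_, fun k hk => ?_⟩
  · have hnonneg := (hρ.mono (hx l hl).1 hle (hx k hk).2).integral_nonneg
    rw [hbetween l k hl hk, sub_nonneg, Nat.cast_le] at hnonneg
    exact hkl.not_ge hnonneg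
  · rw [hbetween k (k + 1) hk.le hk, Nat.cast_succ, add_sub_cancel_left]

namespace IsUnitMassPartition

variable {ρ : ℝ → ℝ} {x : ℕ → ℝ} {M L : ℝ} {j k l N : ℕ}

theorem le_of_le (hx : IsUnitMassPartition ρ x N) (hkl : k ≤ l) (hl : l ≤ N) : x k ≤ x l :=
  hx.strictMonoOn.monotoneOn (hkl.trans hl) hl hkl

theorem isBoundedDensity_cell (hx : IsUnitMassPartition ρ x N)
    (hρ : IsBoundedDensity ρ M (x 0) (x N)) (hk : k < N) : IsBoundedDensity ρ M (x k) (x (k + 1)) :=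
  hρ.mono (hx.le_of_le k.zero_le hk.le) (hx.le_of_le k.le_succ hk) (hx.le_of_le hk le_rfl)

theorem integral_mul_eq_sum (hx : IsUnitMassPartition ρ x N)
    (hρ : IsBoundedDensity ρ M (x 0) (x N)) {f : ℝ → ℝ}
    (hf : ∀ k < N, IntervalIntegrable f volume (x k) (x (k + 1))) :
    ∫ t in x 0..x N, f t * ρ t = ∑ k ∈ range N, ∫ t in x k..x (k + 1), f t * ρ t :=
  (intervalIntegral.sum_integral_adjacent_intervals fun k hk =>
    (hx.isBoundedDensity_cell hρ hk).intervalIntegrable_mul (hf k hk)).symm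

theorem comp_const_add (hx : IsUnitMassPartition ρ x N) (hj : j ≤ N) :
    IsUnitMassPartition (fun s => ρ (x j + s)) (fun i => x (j + i) - x j) (N - j) where
  strictMonoOn k hk l hl hkl := by
    rw [Set.mem_Iic] at hk hl
    exact sub_lt_sub_right (hx.strictMonoOn (by rw [Set.mem_Iic]; omega)
      (by rw [Set.mem_Iic]; omega) (by omega)) _
  integral_eq_one k hk := by
    simp only [intervalIntegral.integral_comp_add_left ρ, add_sub_cancel]
    exact hx.integral_eq_one (j + k) (by omega)

theorem comp_const_sub (hx : IsUnitMassPartition ρ x N) (hj : j ≤ N) :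
    IsUnitMassPartition (fun s => ρ (x j - s)) (fun i => x j - x (j - i)) j where
  strictMonoOn k hk l hl hkl := by
    rw [Set.mem_Iic] at hk hl
    exact sub_lt_sub_left (hx.strictMonoOn (by rw [Set.mem_Iic]; omega)
      (by rw [Set.mem_Iic]; omega) (by omega)) _
  integral_eq_one k hk := by
    simp only [intervalIntegral.integral_comp_sub_left ρ, sub_sub_cancel]
    have h := hx.integral_eq_one (j - (k + 1)) (by omega)
    rwa [show j - (k + 1) + 1 = j - k by omega] at h

theorem nonneg (hx : IsUnitMassPartition ρ x N) (hx0 : x 0 = 0) (hk : k ≤ N) : 0 ≤ x k :=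
  hx0 ▸ hx.le_of_le k.zero_le hk

theorem integral_log_mul_cell_le (hx : IsUnitMassPartition ρ x N) (hx0 : x 0 = 0)
    (hρ : IsBoundedDensity ρ M (x 0) (x N)) (hk : k < N) :
    ∫ s in x k..x (k + 1), Real.log s * ρ s ≤ Real.log (x (k + 1)) := by
  have h := (hx.isBoundedDensity_cell hρ hk).integral_mul_le
    intervalIntegral.intervalIntegrable_log' fun s hs =>
      Real.log_le_log ((hx.nonneg hx0 hk.le).trans_lt hs.1) hs.2.le
  rwa [hx.integral_eq_one k hk, mul_one] at h

theorem log_le_integral_log_mul_cell (hx : IsUnitMassPartition ρ x N) (hx0 : x 0 = 0)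
    (hρ : IsBoundedDensity ρ M (x 0) (x N)) (hk0 : 0 < k) (hk : k < N) :
    Real.log (x k) ≤ ∫ s in x k..x (k + 1), Real.log s * ρ s := by
  have hpos : 0 < x k := hx0 ▸ hx.strictMonoOn (Set.mem_Iic.2 N.zero_le) hk.le hk0
  have h := (hx.isBoundedDensity_cell hρ hk).le_integral_mul
    intervalIntegral.intervalIntegrable_log' fun s hs => Real.log_le_log hpos hs.1.le
  rwa [hx.integral_eq_one k hk, mul_one] at h

theorem integral_log_mul_le_sum_log (hx : IsUnitMassPartition ρ x N) (hx0 : x 0 = 0)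
    (hρ : IsBoundedDensity ρ M (x 0) (x N)) :
    ∫ s in x 0..x N, Real.log s * ρ s ≤ ∑ k ∈ range N, Real.log (x (k + 1)) := by
  rw [hx.integral_mul_eq_sum hρ fun _ _ => intervalIntegral.intervalIntegrable_log']
  exact sum_le_sum fun k hk => hx.integral_log_mul_cell_le hx0 hρ (mem_range.1 hk)

theorem sum_log_sub_integral_log_mul_le (hx : IsUnitMassPartition ρ x N) (hx0 : x 0 = 0)
    (hρ : IsBoundedDensity ρ M (x 0) (x N)) (hN : 0 < N) :
    ∑ k ∈ range N, Real.log (x (k + 1)) - ∫ s in x 0..x N, Real.log s * ρ s ≤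
      Real.log (x N) + (1 + Real.log M) := by
  have hfirst : -(1 + Real.log M) ≤ ∫ s in x 0..x 1, Real.log s * ρ s := by
    have hcell := hx.isBoundedDensity_cell hρ hN
    have hmass := hx.integral_eq_one 0 hN
    rw [hx0] at hcell hmass ⊢
    exact hcell.neg_one_add_log_le_integral_log_mul hmass
  obtain ⟨N, rfl⟩ := Nat.exists_eq_add_one.2 hN
  have hrest : ∑ k ∈ range N, Real.log (x (k + 1)) ≤
      ∑ k ∈ range N, ∫ s in x (k + 1)..x (k + 2), Real.log s * ρ s :=
    sum_le_sum fun k hk => hx.log_le_integral_log_mul_cell hx0 hρ k.succ_pos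
      (Nat.succ_lt_succ (mem_range.1 hk))
  rw [hx.integral_mul_eq_sum hρ fun _ _ => intervalIntegral.intervalIntegrable_log',
    sum_range_succ, sum_range_succ']
  linarith

theorem sum_log_sub_integral_log_mul_mem_Icc (hx : IsUnitMassPartition ρ x N) (hx0 : x 0 = 0)
    (hρ : IsBoundedDensity ρ M (x 0) (x N)) (hL : x N ≤ L) (hML : 1 ≤ M * L) :
    ∑ k ∈ range N, Real.log (x (k + 1)) - ∫ s in x 0..x N, Real.log s * ρ s ∈
      Set.Icc 0 (1 + Real.log (M * L)) := by
  refine ⟨sub_nonneg.2 (hx.integral_log_mul_le_sum_log hx0 hρ), ?_⟩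
  rcases N.eq_zero_or_pos with rfl | hN
  · simpa only [range_zero, sum_empty, intervalIntegral.integral_same, sub_zero]
      using add_nonneg zero_le_one (Real.log_nonneg hML)
  · have hpos : 0 < x N :=
      hx0 ▸ hx.strictMonoOn (Set.mem_Iic.2 N.zero_le) (Set.mem_Iic.2 le_rfl) hN
    have hM : 0 < M := pos_of_mul_pos_left (one_pos.trans_le hML) (hpos.trans_le hL).le
    calc _ ≤ Real.log (x N) + (1 + Real.log M) := hx.sum_log_sub_integral_log_mul_le hx0 hρ hN
      _ ≤ Real.log L + (1 + Real.log M) := by gcongr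
      _ = 1 + Real.log (M * L) := by rw [Real.log_mul hM.ne' (hpos.trans_le hL).ne']; ring

theorem sum_log_right_sub_integral_mem_Icc (hx : IsUnitMassPartition ρ x N)
    (hρ : IsBoundedDensity ρ M (x 0) (x N)) (hj : j ≤ N) (hL : x N - x 0 ≤ L) (hML : 1 ≤ M * L) :
    ∑ i ∈ range (N - j), Real.log |x j - x (j + (i + 1))| -
        ∫ t in x j..x N, Real.log |x j - t| * ρ t ∈ Set.Icc 0 (1 + Real.log (M * L)) := by
  have hle := hx.le_of_le j.zero_le hj
  have h := (hx.comp_const_add hj).sum_log_sub_integral_log_mul_mem_Icc (M := M) (L := L)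
    (sub_self _)
    (by simpa only [add_zero, Nat.add_sub_cancel' hj] using
      (hρ.mono hle (hx.le_of_le hj le_rfl) le_rfl).comp_const_add (x j))
    (by simp only [Nat.add_sub_cancel' hj]; linarith) hML
  have hsubst := intervalIntegral.integral_comp_add_left (a := 0) (b := x N - x j)
    (fun t => Real.log |x j - t| * ρ t) (x j)
  simp only [sub_add_cancel_left, abs_neg, Real.log_abs, add_zero, add_sub_cancel] at hsubst
  have hsymm (i) : Real.log |x j - x (j + (i + 1))| = Real.log (x (j + (i + 1)) - x j) := by
    rw [abs_sub_comm, Real.log_abs]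
  simpa only [hsymm, Real.log_abs, add_zero, sub_self, Nat.add_sub_cancel' hj, hsubst] using h

theorem sum_log_left_sub_integral_mem_Icc (hx : IsUnitMassPartition ρ x N)
    (hρ : IsBoundedDensity ρ M (x 0) (x N)) (hj : j ≤ N) (hL : x N - x 0 ≤ L) (hML : 1 ≤ M * L) :
    ∑ i ∈ range j, Real.log |x j - x (j - (i + 1))| -
        ∫ t in x 0..x j, Real.log |x j - t| * ρ t ∈ Set.Icc 0 (1 + Real.log (M * L)) := by
  have hle := hx.le_of_le hj le_rfl
  have h := (hx.comp_const_sub hj).sum_log_sub_integral_log_mul_mem_Icc (M := M) (L := L)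
    (sub_self _)
    (by simpa only [tsub_zero, tsub_self] using
      (hρ.mono le_rfl (hx.le_of_le j.zero_le hj) hle).comp_const_sub (x j))
    (by simp only [tsub_self]; linarith) hML
  have hsubst := intervalIntegral.integral_comp_sub_left (a := 0) (b := x j - x 0)
    (fun t => Real.log |x j - t| * ρ t) (x j)
  simp only [sub_sub_cancel, Real.log_abs, sub_zero] at hsubst
  simpa only [Real.log_abs, tsub_zero, sub_self, tsub_self, hsubst] using h

theorem sum_log_abs_sub_integral_mem_Icc (hx : IsUnitMassPartition ρ x N)
    (hρ : IsBoundedDensity ρ M (x 0) (x N)) (hj : j ≤ N) (hL : x N - x 0 ≤ L) (hML : 1 ≤ M * L) :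
    ∑ k ∈ (range (N + 1)).erase j, Real.log |x j - x k| -
        ∫ t in x 0..x N, Real.log |x j - t| * ρ t ∈ Set.Icc 0 (2 * (1 + Real.log (M * L))) := by
  have h0j := hx.le_of_le j.zero_le hj
  have hjN := hx.le_of_le hj le_rfl
  have hint {u v : ℝ} (h : IsBoundedDensity ρ M u v) :=
    h.intervalIntegrable_mul (intervalIntegrable_log_abs_const_sub (x j) u v)
  have hleft := hx.sum_log_left_sub_integral_mem_Icc hρ hj hL hML
  have hright := hx.sum_log_right_sub_integral_mem_Icc hρ hj hL hML
  rw [sum_range_succ_erase_eq_add _ hj, ← intervalIntegral.integral_add_adjacent_intervals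
    (hint (hρ.mono le_rfl h0j hjN)) (hint (hρ.mono h0j hjN le_rfl)), add_sub_add_comm, two_mul]
  exact ⟨add_nonneg hleft.1 hright.1, add_le_add hleft.2 hright.2⟩

end IsUnitMassPartition

theorem IsBoundedDensity.sum_log_abs_sub_integral_mem_Icc {ρ : ℝ → ℝ} {M a b : ℝ} {x : ℕ → ℝ}
    {j N : ℕ} (hρ : IsBoundedDensity ρ M a b) (hx : ∀ k ≤ N, x k ∈ Set.Icc a b)
    (hmass : ∀ k ≤ N, ∫ t in a..x k, ρ t = k) (htotal : ∫ t in a..b, ρ t = N) (hN : 0 < N)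
    (hj : j ≤ N) :
    ∑ k ∈ (range (N + 1)).erase j, Real.log |x j - x k| -
        ∫ t in a..b, Real.log |x j - t| * ρ t ∈ Set.Icc 0 (2 * (1 + Real.log (M * (b - a)))) := by
  have hpart := hρ.isUnitMassPartition hx hmass
  have h0N := hpart.le_of_le N.zero_le le_rfl
  obtain ⟨ha, h0b⟩ := hx 0 N.zero_le
  obtain ⟨haN, hb⟩ := hx N le_rfl
  have hmass0N : ∫ t in x 0..x N, ρ t = ∫ t in a..b, ρ t := by
    rw [← intervalIntegral.integral_interval_sub_left (hρ.mono le_rfl haN hb).intervalIntegrable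
      (hρ.mono le_rfl ha h0b).intervalIntegrable, hmass N le_rfl, hmass 0 N.zero_le, htotal,
      Nat.cast_zero, sub_zero]
  have hML : 1 ≤ M * (b - a) :=
    calc (1 : ℝ) ≤ N := Nat.one_le_cast.2 hN
      _ ≤ M * (b - a) := htotal ▸ hρ.integral_le
  rw [← hρ.integral_mul_eq_of_integral_eq ha h0N hb hmass0N
    (intervalIntegrable_log_abs_const_sub (x j) a b)]
  exact hpart.sum_log_abs_sub_integral_mem_Icc (hρ.mono ha h0N hb) hj (sub_le_sub hb ha) hML

theorem log_abs_prod_quantiles_sub_mem_Icc {κ : ℝ → ℝ} {M A B : ℝ} (hκ : IsBoundedDensity κ M A B)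
    (hnorm : ∫ t in A..B, κ t = 2) {n : ℕ} (hn : 0 < n) {α : ℕ → ℝ}
    (hα : ∀ j ≤ 2 * n, α j ∈ Set.Icc A B ∧ ∫ t in A..α j, κ t = (j : ℝ) / n) {j : ℕ}
    (hj : j ≤ 2 * n) :
    Real.log |∏ k ∈ (range (2 * n + 1)).erase j, ((n : ℝ) * α j - (n : ℝ) * α k)| -
        2 * (n : ℝ) * Real.log n - (n : ℝ) * ∫ t in A..B, Real.log |α j - t| * κ t ∈
      Set.Icc 0 (2 * (1 + Real.log (n * M * (B - A)))) := by
  have hn0 : (n : ℝ) ≠ 0 := Nat.cast_ne_zero.2 hn.ne'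
  have hρ := hκ.const_mul n.cast_nonneg
  have hmass (k) (hk : k ≤ 2 * n) : ∫ t in A..α k, n * κ t = k := by
    rw [intervalIntegral.integral_const_mul, (hα k hk).2, mul_div_cancel₀ _ hn0]
  have htotal : ∫ t in A..B, n * κ t = (2 * n : ℕ) := by
    rw [intervalIntegral.integral_const_mul, hnorm]
    push_cast
    ring
  have hmem (k) (hk : k ≤ 2 * n) := (hα k hk).1
  have hinj := (hρ.isUnitMassPartition hmem hmass).strictMonoOn.injOn
  have hne : ∀ k ∈ (range (2 * n + 1)).erase j, α j - α k ≠ 0 := fun k hk => by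
    obtain ⟨hkj, hk⟩ := mem_erase.1 hk
    exact sub_ne_zero.2 fun h => hkj (hinj hj (mem_range_succ_iff.1 hk) h).symm
  have hcard : #((range (2 * n + 1)).erase j) = 2 * n := by
    rw [card_erase_of_mem (mem_range_succ_iff.2 hj), card_range, Nat.succ_sub_one]
  have h := hρ.sum_log_abs_sub_integral_mem_Icc hmem hmass htotal (Nat.mul_pos two_pos hn) hj
  simp only [mul_left_comm _ (n : ℝ), intervalIntegral.integral_const_mul] at h
  simp only [← mul_sub]
  rw [log_abs_prod_const_mul _ hn0 hne, hcard, Nat.cast_mul, Nat.cast_ofNat, add_sub_cancel_left]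
  exact h

theorem node_polynomial_derivative_asymptotics_general
    {M A B : ℝ} {κ : ℝ → ℝ} (hκ : IsBoundedDensity κ M A B)
    (hnorm : ∫ x in A..B, κ x = 2)
    {α : ℕ → ℕ → ℝ}
    (hα : ∀ n : ℕ, 2 ≤ n → ∀ j, j ≤ 2 * n →
      α n j ∈ Set.Icc A B ∧ ∫ t in A..(α n j), κ t = (j : ℝ) / n) :
    ∃ C : ℝ, 0 < C ∧ ∀ n : ℕ, 2 ≤ n → ∀ j, j ≤ 2 * n →
      |Real.log
          |∏ k ∈ (Finset.range (2 * n + 1)).erase j,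
              ((n : ℝ) * α n j - (n : ℝ) * α n k)|
        - 2 * (n : ℝ) * Real.log n
        - (n : ℝ) * ∫ t in A..B, Real.log |α n j - t| * κ t| ≤ C * Real.log n := by
  have hMAB : 2 ≤ M * (B - A) := hnorm ▸ hκ.integral_le
  set D := 1 + Real.log (M * (B - A)) with hD
  have hD0 : 0 ≤ D := add_nonneg zero_le_one (Real.log_nonneg (by linarith))
  have hlog2 : 0 < Real.log 2 := Real.log_pos one_lt_two
  refine ⟨2 * (D / Real.log 2 + 1), by positivity, fun n hn j hj => ?_⟩
  have hn0 : (n : ℝ) ≠ 0 := Nat.cast_ne_zero.2 (by omega)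
  have hlogn : Real.log 2 ≤ Real.log n := Real.log_le_log two_pos (Nat.ofNat_le_cast.2 hn)
  have hmem := log_abs_prod_quantiles_sub_mem_Icc hκ hnorm (by omega) (hα n hn) hj
  calc _ ≤ 2 * (1 + Real.log (n * M * (B - A))) := (abs_of_nonneg hmem.1).trans_le hmem.2
    _ = 2 * (D + Real.log n) := by
        rw [mul_assoc, Real.log_mul hn0 (by linarith), hD]
        ring
    _ = 2 * (D / Real.log 2 * Real.log 2 + Real.log n) := by rw [div_mul_cancel₀ _ hlog2.ne']
    _ ≤ 2 * (D / Real.log 2 * Real.log n + Real.log n) := by gcongr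
    _ = 2 * (D / Real.log 2 + 1) * Real.log n := by ring

/-- **Asymptotics of the derivative of the node polynomial at the nodes.**
Let `0 < A < B`, `κ` real-analytic and positive on an open set containing `[A,B]` with
`∫_A^B κ = 2`, quantile nodes `α n j` and scaled nodes `a_{n,j} = n·α n j`.  With
`ω_n(z) = ∏_{k=0}^{2n}(z - a_{n,k})`, so that `ω_n'(a_{n,j}) = ∏_{k≠j}(a_{n,j} - a_{n,k})`,
there exists `C > 0`, depending only on `κ, A, B`, such that for all `n ≥ 2` and all
`j = 0, …, 2n`:
`| log|ω_n'(a_{n,j})| - 2n·log n - n·∫_A^B log|α n j - t|·κ(t) dt | ≤ C·log n`. -/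
theorem node_polynomial_derivative_asymptotics
    (A B : ℝ) (hA : 0 < A) (hAB : A < B)
    (κ : ℝ → ℝ)
    (hκ : ∃ U : Set ℝ, IsOpen U ∧ Set.Icc A B ⊆ U ∧
      ∀ x ∈ U, AnalyticAt ℝ κ x ∧ 0 < κ x)
    (hnorm : ∫ x in A..B, κ x = 2)
    (α : ℕ → ℕ → ℝ)
    (hα : ∀ n : ℕ, 1 ≤ n → ∀ j, j ≤ 2 * n →
      α n j ∈ Set.Icc A B ∧ ∫ t in A..(α n j), κ t = (j : ℝ) / n) :
    ∃ C : ℝ, 0 < C ∧ ∀ n : ℕ, 2 ≤ n → ∀ j, j ≤ 2 * n →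
      |Real.log
          |∏ k ∈ (Finset.range (2 * n + 1)).erase j,
              ((n : ℝ) * α n j - (n : ℝ) * α n k)|
        - 2 * (n : ℝ) * Real.log n
        - (n : ℝ) * ∫ t in A..B, Real.log |α n j - t| * κ t| ≤ C * Real.log n := by
  obtain ⟨U, -, hsub, hU⟩ := hκ
  obtain ⟨M, hM⟩ := exists_isBoundedDensity_of_continuousOn hAB.le
    (fun x hx => (hU x (hsub hx)).1.continuousAt.continuousWithinAt)
    fun x hx => (hU x (hsub hx)).2.le
  exact node_polynomial_derivative_asymptotics_general hM hnorm fun n hn => hα n (by omega)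
end

section
/- There exists a unique measure μ* in the admissible class 𝔄 that minimizes the weighted logarithmic energy, i.e., I_V[μ*] ≤ I_V[μ] for all μ ∈ 𝔄, and any μ ∈ 𝔄 with I_V[μ] = I_V[μ*] equals μ*. -/
open MeasureTheory

/-- The external field `V(x) = -2 ∫_A^B log|x-t| κ(t) dt`. -/
noncomputable def extField (A B : ℝ) (κ : ℝ → ℝ) (x : ℝ) : ℝ :=
  -2 * ∫ t in A..B, Real.log |x - t| * κ t

/-- The admissible class `𝔄`: Borel probability measures supported on `[A,B]`,
absolutely continuous w.r.t. Lebesgue measure with density `0 ≤ dμ/dx ≤ κ` a.e. -/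
def AdmissibleClass (A B : ℝ) (κ : ℝ → ℝ) (μ : Measure ℝ) : Prop :=
  IsProbabilityMeasure μ ∧ μ (Set.Icc A B)ᶜ = 0 ∧ μ ≪ volume ∧
    ∀ᵐ x ∂(volume.restrict (Set.Icc A B)),
      μ.rnDeriv volume x ≤ ENNReal.ofReal (κ x)

/-- The weighted logarithmic energy
`I_V[μ] = ∬ log(1/|x-y|) dμ(x) dμ(y) + ∫ V dμ`. -/
noncomputable def logEnergy (A B : ℝ) (κ : ℝ → ℝ) (μ : Measure ℝ) : ℝ :=
  (∫ x, (∫ y, Real.log (1 / |x - y|) ∂μ) ∂μ) + ∫ x, extField A B κ x ∂μ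

/-!
Write `σ` for the measure `κ(x) dx` on `[A, B]`. The admissible measures are the probability
measures `μ ≤ σ`; they form a compact convex set for weak convergence. The domination by `σ` makes
`μ ↦ ∫ f dμ` continuous on this set for every `f ∈ L¹(σ)`, and `log |x - y|` lies in `L¹(σ ⊗ σ)`, so
the energy is continuous despite the singularity of the kernel and a minimizer exists.

For uniqueness, the length of the set of `z` for which the window `[z, z + s)` contains both `x`
and `y` is `(s - |x - y|)⁺`, and integrating this against `s⁻² ds` over `(0, R]`, with an atom of
mass `R⁻¹` at `s = R`, gives `log (R / |x - y|)`. Hence the energy of `μ - ν` is a weighted integral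
of `(μ[z, z + s) - ν[z, z + s))²`, and the atom at `R = B - A` shows that it is positive unless
`μ = ν`. The energy at the average of two distinct minimizers would then lie below the minimum.
-/

open Filter Topology
open scoped ENNReal

section Dominated

variable {X : Type*} [MeasurableSpace X]

/-- The probability measures satisfying the upper constraint `μ ≤ σ`. -/
def dominatedBy (σ : Measure X) : Set (ProbabilityMeasure X) :=
  {μ | (μ : Measure X) ≤ σ}

theorem dominatedBy_nonempty {σ : Measure X} [IsFiniteMeasure σ] (hσ : 1 ≤ σ Set.univ) :
    (dominatedBy σ).Nonempty := by
  have : NeZero σ := ⟨fun h => by simp [h] at hσ⟩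
  refine ⟨⟨(σ Set.univ)⁻¹ • σ, inferInstance⟩, Measure.le_iff.2 fun s _ => ?_⟩
  exact mul_le_of_le_one_left' (ENNReal.inv_le_one.2 hσ)

variable [TopologicalSpace X] [BorelSpace X]

theorem isTightMeasureSet_dominatedBy [TopologicalSpace.IsCompletelyPseudoMetrizableSpace X]
    [SecondCountableTopology X] (σ : Measure X) [IsFiniteMeasure σ] :
    IsTightMeasureSet {(μ : Measure X) | μ ∈ dominatedBy σ} := by
  refine isTightMeasureSet_iff_exists_isCompact_measure_compl_le.2 fun ε hε => ?_
  obtain ⟨K, hK, hσK⟩ := isTightMeasureSet_iff_exists_isCompact_measure_compl_le.1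
    (isTightMeasureSet_singleton (μ := σ)) ε hε
  exact ⟨K, hK, fun _ ⟨_, hμ, hμ_eq⟩ => hμ_eq ▸ (hμ Kᶜ).trans (hσK σ rfl)⟩

/- The constraint is tested on open sets, where the mass is lower semicontinuous, and passes to
all Borel sets by outer regularity of `σ`. -/
theorem isClosed_dominatedBy [HasOuterApproxClosed X] (σ : Measure X) [σ.OuterRegular] :
    IsClosed (dominatedBy σ) := by
  refine isClosed_iff_ultrafilter.2 fun μ u hu hdom => Measure.le_iff.2 fun s _ => ?_
  have le_of_isOpen : ∀ U : Set X, IsOpen U → (μ : Measure X) U ≤ σ U := fun U hU =>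
    (ProbabilityMeasure.le_liminf_measure_open_of_tendsto (μs := id) hu hU).trans <|
      liminf_le_of_frequently_le' (Eventually.frequently <| mem_of_superset hdom fun ν hν => hν U)
  rw [s.measure_eq_iInf_isOpen σ]
  exact le_iInf₂ fun U hsU => le_iInf fun hU => (measure_mono hsU).trans (le_of_isOpen U hU)

theorem isCompact_dominatedBy [PolishSpace X] (σ : Measure X) [IsFiniteMeasure σ] :
    IsCompact (dominatedBy σ) := by
  let _ := TopologicalSpace.upgradeIsCompletelyMetrizable X
  exact (isClosed_dominatedBy σ).closure_eq ▸
    isCompact_closure_of_isTightMeasureSet (isTightMeasureSet_dominatedBy σ)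

theorem continuousOn_integral_dominatedBy [NormalSpace X] {σ : Measure X}
    [σ.WeaklyRegular] {f : X → ℝ} (hf : Integrable f σ) :
    ContinuousOn (fun μ : ProbabilityMeasure X => ∫ x, f x ∂(μ : Measure X)) (dominatedBy σ) := by
  refine continuousOn_of_uniform_approx_of_continuousOn fun u hu => ?_
  obtain ⟨ε, hε, hεu⟩ := Metric.mem_uniformity_dist.1 hu
  obtain ⟨g, hfg, hg⟩ := hf.exists_boundedContinuous_integral_sub_le (half_pos hε)
  refine ⟨fun μ => ∫ x, g x ∂(μ : Measure X),
    (ProbabilityMeasure.continuous_integral_boundedContinuousFunction g).continuousOn,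
    fun μ hμ => hεu ?_⟩
  calc dist (∫ x, f x ∂(μ : Measure X)) (∫ x, g x ∂(μ : Measure X))
      = ‖∫ x, (f x - g x) ∂(μ : Measure X)‖ := by
        rw [dist_eq_norm, integral_sub (hf.mono_measure hμ) (hg.mono_measure hμ)]
    _ ≤ ∫ x, ‖f x - g x‖ ∂(μ : Measure X) := norm_integral_le_integral_norm _
    _ ≤ ∫ x, ‖f x - g x‖ ∂σ :=
        integral_mono_measure hμ (ae_of_all _ fun x => norm_nonneg _) (hf.sub hg).norm
    _ < ε := by linarith

end Dominated

section WeightedEnergy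

variable {X : Type*} [MeasurableSpace X]

/-- The mutual energy `∬ K(x, y) dμ(x) dν(y)` of two measures with respect to a kernel `K`. -/
noncomputable def mutualEnergy (K : X × X → ℝ) (μ ν : Measure X) : ℝ :=
  ∫ p, K p ∂(μ.prod ν)

/-- The energy `∬ K dμ dμ + ∫ V dμ` of a measure in the external field `V`. -/
noncomputable def weightedEnergy (K : X × X → ℝ) (V : X → ℝ) (μ : Measure X) : ℝ :=
  mutualEnergy K μ μ + ∫ x, V x ∂μ

/-- The energy `∬ K d(μ - ν) d(μ - ν)` of the signed measure `μ - ν` for a symmetric kernel,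
expanded so that no signed measure occurs. -/
noncomputable def energyDist (K : X × X → ℝ) (μ ν : Measure X) : ℝ :=
  mutualEnergy K μ μ - 2 * mutualEnergy K μ ν + mutualEnergy K ν ν

/-- The average `(μ + ν) / 2` of two measures. -/
noncomputable def averageMeasure (μ ν : Measure X) : Measure X :=
  (2⁻¹ : ℝ≥0∞) • (μ + ν)

instance (μ ν : Measure X) [IsProbabilityMeasure μ] [IsProbabilityMeasure ν] :
    IsProbabilityMeasure (averageMeasure μ ν) :=
  ⟨by simp [averageMeasure, ENNReal.inv_two_add_inv_two]⟩

theorem averageMeasure_le {μ ν σ : Measure X} (hμ : μ ≤ σ) (hν : ν ≤ σ) :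
    averageMeasure μ ν ≤ σ := by
  refine Measure.le_iff.2 fun s _ => ?_
  calc 2⁻¹ * (μ s + ν s) ≤ 2⁻¹ * (σ s + σ s) := by gcongr
    _ = σ s := by rw [← two_mul, ENNReal.inv_mul_cancel_left (by simp) (by simp)]

theorem integral_averageMeasure {f : X → ℝ} {μ ν : Measure X} (hμ : Integrable f μ)
    (hν : Integrable f ν) :
    ∫ x, f x ∂(averageMeasure μ ν) = (∫ x, f x ∂μ + ∫ x, f x ∂ν) / 2 := by
  rw [averageMeasure, integral_smul_measure, integral_add_measure hμ hν, ENNReal.toReal_inv,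
    smul_eq_mul, ENNReal.toReal_ofNat, inv_mul_eq_div]

theorem integrable_prod_of_le {K : X × X → ℝ} {σ μ ν : Measure X} [SFinite σ]
    (hK : Integrable K (σ.prod σ)) (hμ : μ ≤ σ) (hν : ν ≤ σ) : Integrable K (μ.prod ν) :=
  hK.mono_measure (Measure.prod_mono hμ hν)

variable {K : X × X → ℝ} {V : X → ℝ} {σ μ ν : Measure X}

theorem mutualEnergy_comm (hsymm : ∀ p, K p.swap = K p) [SFinite μ] [SFinite ν] :
    mutualEnergy K μ ν = mutualEnergy K ν μ := by
  simp only [mutualEnergy, ← integral_prod_swap (μ := μ) (ν := ν) K, hsymm]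

variable [SFinite σ]

theorem mutualEnergy_averageMeasure [SFinite μ] [SFinite ν]
    (hsymm : ∀ p, K p.swap = K p) (hK : Integrable K (σ.prod σ)) (hμ : μ ≤ σ) (hν : ν ≤ σ) :
    mutualEnergy K (averageMeasure μ ν) (averageMeasure μ ν) =
      (mutualEnergy K μ μ + 2 * mutualEnergy K μ ν + mutualEnergy K ν ν) / 4 := by
  have hμμ := integrable_prod_of_le hK hμ hμ
  have hμν := integrable_prod_of_le hK hμ hν
  have hνμ := integrable_prod_of_le hK hν hμ
  have hνν := integrable_prod_of_le hK hν hν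
  have bilinear : mutualEnergy K (averageMeasure μ ν) (averageMeasure μ ν) =
      2⁻¹ * (2⁻¹ * ((mutualEnergy K μ μ + mutualEnergy K ν μ) +
        (mutualEnergy K μ ν + mutualEnergy K ν ν))) := by
    simp only [mutualEnergy, averageMeasure]
    rw [Measure.prod_smul_left, Measure.prod_smul_right, Measure.prod_add, Measure.add_prod,
      Measure.add_prod, integral_smul_measure, integral_smul_measure,
      integral_add_measure (hμμ.add_measure hνμ) (hμν.add_measure hνν),
      integral_add_measure hμμ hνμ, integral_add_measure hμν hνν]
    simp only [ENNReal.toReal_inv, ENNReal.toReal_ofNat, smul_eq_mul]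
  rw [bilinear, mutualEnergy_comm (μ := ν) hsymm]
  ring

theorem weightedEnergy_averageMeasure [SFinite μ] [SFinite ν]
    (hsymm : ∀ p, K p.swap = K p) (hK : Integrable K (σ.prod σ)) (hV : Integrable V σ)
    (hμ : μ ≤ σ) (hν : ν ≤ σ) :
    weightedEnergy K V (averageMeasure μ ν) =
      (weightedEnergy K V μ + weightedEnergy K V ν) / 2 - energyDist K μ ν / 4 := by
  simp only [weightedEnergy, energyDist, mutualEnergy_averageMeasure hsymm hK hμ hν,
    integral_averageMeasure (hV.mono_measure hμ) (hV.mono_measure hν)]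
  ring

theorem eq_of_isMinOn_weightedEnergy (hsymm : ∀ p, K p.swap = K p)
    (hK : Integrable K (σ.prod σ)) (hV : Integrable V σ)
    (hpos : (dominatedBy σ).Pairwise fun μ ν => 0 < energyDist K (μ : Measure X) ν)
    {μ ν : ProbabilityMeasure X} (hμ : μ ∈ dominatedBy σ) (hν : ν ∈ dominatedBy σ)
    (hμmin : IsMinOn (fun α : ProbabilityMeasure X => weightedEnergy K V α) (dominatedBy σ) μ)
    (hνmin : IsMinOn (fun α : ProbabilityMeasure X => weightedEnergy K V α) (dominatedBy σ) ν) :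
    μ = ν := by
  by_contra hne
  have le_average : weightedEnergy K V μ ≤ weightedEnergy K V (averageMeasure (μ : Measure X) ν) :=
    hμmin (a := ⟨averageMeasure (μ : Measure X) ν, inferInstance⟩) (averageMeasure_le hμ hν)
  have ν_le_μ : weightedEnergy K V ν ≤ weightedEnergy K V μ := hνmin hμ
  have dist_pos : 0 < energyDist K (μ : Measure X) ν := hpos hμ hν hne
  rw [weightedEnergy_averageMeasure hsymm hK hV hμ hν] at le_average
  linarith

end WeightedEnergy

section Minimizer

variable {X : Type*} [MeasurableSpace X] [TopologicalSpace X] [PolishSpace X] [BorelSpace X]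
  {σ : Measure X} [IsFiniteMeasure σ] {K : X × X → ℝ} {V : X → ℝ}

theorem continuousOn_weightedEnergy_dominatedBy (hK : Integrable K (σ.prod σ))
    (hV : Integrable V σ) :
    ContinuousOn (fun μ : ProbabilityMeasure X => weightedEnergy K V (μ : Measure X))
      (dominatedBy σ) := by
  let _ := TopologicalSpace.upgradeIsCompletelyMetrizable X
  have mutual_continuousOn : ContinuousOn
      (fun μ : ProbabilityMeasure X => mutualEnergy K (μ : Measure X) (μ : Measure X))
      (dominatedBy σ) :=
    (continuousOn_integral_dominatedBy hK).comp
      (ProbabilityMeasure.continuous_prod.comp (continuous_id.prodMk continuous_id)).continuousOn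
      fun μ hμ => Measure.prod_mono hμ hμ
  exact mutual_continuousOn.add (continuousOn_integral_dominatedBy hV)

theorem exists_isMinOn_weightedEnergy (hσ : 1 ≤ σ Set.univ) (hK : Integrable K (σ.prod σ))
    (hV : Integrable V σ) :
    ∃ μ ∈ dominatedBy σ,
      IsMinOn (fun ν : ProbabilityMeasure X => weightedEnergy K V ν) (dominatedBy σ) μ :=
  (isCompact_dominatedBy σ).exists_isMinOn (dominatedBy_nonempty hσ)
    (continuousOn_weightedEnergy_dominatedBy hK hV)

theorem existsUnique_isMinOn_weightedEnergy (hσ : 1 ≤ σ Set.univ)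
    (hsymm : ∀ p, K p.swap = K p) (hK : Integrable K (σ.prod σ)) (hV : Integrable V σ)
    (hpos : (dominatedBy σ).Pairwise fun μ ν => 0 < energyDist K (μ : Measure X) ν) :
    ∃! μ : ProbabilityMeasure X, μ ∈ dominatedBy σ ∧
      IsMinOn (fun ν : ProbabilityMeasure X => weightedEnergy K V ν) (dominatedBy σ) μ := by
  obtain ⟨μ, hμ, hmin⟩ := exists_isMinOn_weightedEnergy hσ hK hV
  exact ⟨μ, ⟨hμ, hmin⟩, fun ν hν => eq_of_isMinOn_weightedEnergy hsymm hK hV hpos hν.1 hμ hν.2 hmin⟩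

end Minimizer

section Overlap

variable {X W : Type*} [MeasurableSpace X] [MeasurableSpace W]

/-- The overlap kernel of a family of sets `S w` indexed by a measure space `(W, ρ)`: the measure
of the indices `w` for which `S w` contains both points. It is the positive definite kernel
`∫ 1_{S w}(x) 1_{S w}(y) dρ(w)`. -/
noncomputable def overlap (ρ : Measure W) (S : W → Set X) (p : X × X) : ℝ≥0∞ :=
  ρ {w | p.1 ∈ S w ∧ p.2 ∈ S w}

/-- `K` agrees `σ ⊗ σ`-almost everywhere with an overlap kernel, up to the additive constant `c`.
Such a constant is invisible to `energyDist` between probability measures. -/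
structure IsOverlapKernel (ρ : Measure W) (S : W → Set X) (σ : Measure X) (c : ℝ)
    (K : X × X → ℝ) : Prop where
  measurableSet : MeasurableSet {q : W × X | q.2 ∈ S q.1}
  nonneg : ∀ᵐ p ∂(σ.prod σ), 0 ≤ K p + c
  overlap_eq : ∀ᵐ p ∂(σ.prod σ), overlap ρ S p = ENNReal.ofReal (K p + c)

variable {ρ : Measure W} {S : W → Set X} {σ μ ν : Measure X} {K : X × X → ℝ} {c : ℝ}

theorem lintegral_overlap [SFinite ρ] (hS : MeasurableSet {q : W × X | q.2 ∈ S q.1})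
    (μ ν : Measure X) [SFinite μ] [SFinite ν] :
    ∫⁻ p, overlap ρ S p ∂(μ.prod ν) = ∫⁻ w, μ (S w) * ν (S w) ∂ρ := by
  let E : Set (W × X × X) := {q | q.2.1 ∈ S q.1 ∧ q.2.2 ∈ S q.1}
  have hE : MeasurableSet E :=
    (hS.preimage (measurable_fst.prodMk (measurable_fst.comp measurable_snd))).inter
      (hS.preimage (measurable_fst.prodMk (measurable_snd.comp measurable_snd)))
  calc ∫⁻ p, overlap ρ S p ∂(μ.prod ν) = ρ.prod (μ.prod ν) E := (Measure.prod_apply_symm hE).symm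
    _ = ∫⁻ w, μ.prod ν (S w ×ˢ S w) ∂ρ := Measure.prod_apply hE
    _ = ∫⁻ w, μ (S w) * ν (S w) ∂ρ := by simp only [Measure.prod_prod]

theorem integral_prod_add_const [SFinite σ] [IsProbabilityMeasure μ] [IsProbabilityMeasure ν]
    (hK : Integrable K (σ.prod σ)) (hμ : μ ≤ σ) (hν : ν ≤ σ) :
    ∫ p, (K p + c) ∂(μ.prod ν) = mutualEnergy K μ ν + c := by
  rw [integral_add (integrable_prod_of_le hK hμ hν) (integrable_const c), integral_const,
    probReal_univ, one_smul, mutualEnergy]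

namespace IsOverlapKernel

theorem ae_prod_nonneg [SFinite σ] (h : IsOverlapKernel ρ S σ c K) (hμ : μ ≤ σ) (hν : ν ≤ σ) :
    0 ≤ᵐ[μ.prod ν] fun p => K p + c :=
  (Measure.prod_mono hμ hν).absolutelyContinuous.ae_le h.nonneg

theorem measurable_measure_mul_measure [SFinite μ] [SFinite ν] (h : IsOverlapKernel ρ S σ c K) :
    Measurable fun w => μ (S w) * ν (S w) :=
  (measurable_measure_prodMk_left h.measurableSet).mul
    (measurable_measure_prodMk_left h.measurableSet)

variable [SFinite ρ] [SFinite σ] [IsProbabilityMeasure μ] [IsProbabilityMeasure ν]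

theorem lintegral_measure_mul_measure (h : IsOverlapKernel ρ S σ c K)
    (hK : Integrable K (σ.prod σ)) (hμ : μ ≤ σ) (hν : ν ≤ σ) :
    ∫⁻ w, μ (S w) * ν (S w) ∂ρ = ENNReal.ofReal (mutualEnergy K μ ν + c) := by
  calc ∫⁻ w, μ (S w) * ν (S w) ∂ρ = ∫⁻ p, overlap ρ S p ∂(μ.prod ν) :=
        (lintegral_overlap h.measurableSet μ ν).symm
    _ = ∫⁻ p, ENNReal.ofReal (K p + c) ∂(μ.prod ν) :=
        lintegral_congr_ae ((Measure.prod_mono hμ hν).absolutelyContinuous.ae_le h.overlap_eq)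
    _ = ENNReal.ofReal (∫ p, (K p + c) ∂(μ.prod ν)) :=
        (ofReal_integral_eq_lintegral_ofReal
          ((integrable_prod_of_le hK hμ hν).add (integrable_const c))
          (h.ae_prod_nonneg hμ hν)).symm
    _ = ENNReal.ofReal (mutualEnergy K μ ν + c) := by rw [integral_prod_add_const hK hμ hν]

theorem integrable_measureReal_mul (h : IsOverlapKernel ρ S σ c K)
    (hK : Integrable K (σ.prod σ)) (hμ : μ ≤ σ) (hν : ν ≤ σ) :
    Integrable (fun w => μ.real (S w) * ν.real (S w)) ρ := by
  simpa only [Measure.real, ENNReal.toReal_mul] using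
    integrable_toReal_of_lintegral_ne_top h.measurable_measure_mul_measure.aemeasurable
      ((h.lintegral_measure_mul_measure hK hμ hν).trans_ne ENNReal.ofReal_ne_top)

theorem integral_measureReal_mul (h : IsOverlapKernel ρ S σ c K)
    (hK : Integrable K (σ.prod σ)) (hμ : μ ≤ σ) (hν : ν ≤ σ) :
    ∫ w, μ.real (S w) * ν.real (S w) ∂ρ = mutualEnergy K μ ν + c := by
  have nonneg : 0 ≤ mutualEnergy K μ ν + c :=
    integral_prod_add_const hK hμ hν ▸ integral_nonneg_of_ae (h.ae_prod_nonneg hμ hν)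
  simp only [Measure.real, ← ENNReal.toReal_mul]
  rw [integral_toReal h.measurable_measure_mul_measure.aemeasurable
    (ae_of_all _ fun w => by finiteness), h.lintegral_measure_mul_measure hK hμ hν,
    ENNReal.toReal_ofReal nonneg]

theorem energyDist_eq_integral_sq (h : IsOverlapKernel ρ S σ c K)
    (hK : Integrable K (σ.prod σ)) (hμ : μ ≤ σ) (hν : ν ≤ σ) :
    Integrable (fun w => (μ.real (S w) - ν.real (S w)) ^ 2) ρ ∧
      energyDist K μ ν = ∫ w, (μ.real (S w) - ν.real (S w)) ^ 2 ∂ρ := by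
  have sq_eq : (fun w => (μ.real (S w) - ν.real (S w)) ^ 2) = fun w =>
      μ.real (S w) * μ.real (S w) - 2 * (μ.real (S w) * ν.real (S w)) +
        ν.real (S w) * ν.real (S w) := by
    ext w; ring
  have hμμ := h.integrable_measureReal_mul hK hμ hμ
  have hμν := (h.integrable_measureReal_mul hK hμ hν).const_mul 2
  have hνν := h.integrable_measureReal_mul hK hν hν
  have hsub : Integrable (fun w => μ.real (S w) * μ.real (S w) -
      2 * (μ.real (S w) * ν.real (S w))) ρ := hμμ.sub hμν
  rw [sq_eq]
  refine ⟨hsub.add hνν, ?_⟩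
  rw [integral_add hsub hνν, integral_sub hμμ hμν, integral_const_mul,
    h.integral_measureReal_mul hK hμ hμ, h.integral_measureReal_mul hK hμ hν,
    h.integral_measureReal_mul hK hν hν, energyDist]
  ring

theorem ae_measure_eq_of_energyDist_nonpos (h : IsOverlapKernel ρ S σ c K)
    (hK : Integrable K (σ.prod σ)) (hμ : μ ≤ σ) (hν : ν ≤ σ) (hdist : energyDist K μ ν ≤ 0) :
    ∀ᵐ w ∂ρ, μ (S w) = ν (S w) := by
  obtain ⟨sq_int, hdist_eq⟩ := h.energyDist_eq_integral_sq hK hμ hν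
  have integral_eq_zero : ∫ w, (μ.real (S w) - ν.real (S w)) ^ 2 ∂ρ = 0 :=
    le_antisymm (hdist_eq ▸ hdist) (integral_nonneg fun w => sq_nonneg _)
  filter_upwards [(integral_eq_zero_iff_of_nonneg (fun w => sq_nonneg _) sq_int).1 integral_eq_zero]
    with w hw
  exact (measureReal_eq_measureReal_iff).1 (sub_eq_zero.1 (pow_eq_zero_iff two_ne_zero |>.1 hw))

end IsOverlapKernel

end Overlap

section LogKernel

/-- The logarithmic kernel `log (1 / |x - y|)`, which is `0` on the diagonal because
`Real.log 0 = 0`. -/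
noncomputable def logKernel (p : ℝ × ℝ) : ℝ :=
  -Real.log |p.1 - p.2|

/-- The measure on the lengths of intervals whose overlap kernel is the logarithmic kernel at
distances up to `R`, up to a constant. -/
noncomputable def scaleMeasure (R : ℝ) : Measure ℝ :=
  (volume.restrict (Set.Ioc 0 R)).withDensity (fun s => ENNReal.ofReal (s ^ 2)⁻¹) +
    ENNReal.ofReal R⁻¹ • Measure.dirac R

/-- The interval `[z, z + s)`, indexed by `w = (s, z)`. -/
def window (w : ℝ × ℝ) : Set ℝ :=
  Set.Ico w.2 (w.2 + w.1)

instance (R : ℝ) : SFinite (scaleMeasure R) := by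
  unfold scaleMeasure; infer_instance

theorem logKernel_swap (p : ℝ × ℝ) : logKernel p.swap = logKernel p := by
  simp only [logKernel, Prod.fst_swap, Prod.snd_swap, abs_sub_comm]

theorem setLIntegral_inv_sq_mul_sub {a R : ℝ} (ha : 0 < a) (haR : a ≤ R) :
    ∫⁻ s in Set.Ioc a R, ENNReal.ofReal ((s ^ 2)⁻¹ * (s - a)) =
      ENNReal.ofReal (Real.log R - Real.log a - (1 - a / R)) := by
  have ne_zero : ∀ s ∈ Set.uIcc a R, s ≠ 0 := fun s hs =>
    (ha.trans_le (Set.uIcc_of_le haR ▸ hs).1).ne'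
  have kernel_int : IntervalIntegrable (fun s => (s ^ 2)⁻¹ * (s - a)) volume a R :=
    ContinuousOn.intervalIntegrable <|
      ((continuousOn_pow 2).inv₀ fun s hs => pow_ne_zero 2 (ne_zero s hs)).mul (by fun_prop)
  have hderiv : ∀ s ∈ Set.uIcc a R,
      HasDerivAt (fun s => Real.log s + a * s⁻¹) ((s ^ 2)⁻¹ * (s - a)) s := fun s hs => by
    have := ne_zero s hs
    refine ((Real.hasDerivAt_log this).add ((hasDerivAt_inv this).const_mul a)).congr_deriv ?_
    field_simp
    ring
  have hnonneg : ∀ᵐ s ∂volume.restrict (Set.Ioc a R), 0 ≤ (s ^ 2)⁻¹ * (s - a) :=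
    (ae_restrict_mem measurableSet_Ioc).mono fun s hs =>
      mul_nonneg (by positivity) (sub_nonneg.2 hs.1.le)
  rw [← ofReal_integral_eq_lintegral_ofReal
      ((intervalIntegrable_iff_integrableOn_Ioc_of_le haR).1 kernel_int) hnonneg,
    ← intervalIntegral.integral_of_le haR,
    intervalIntegral.integral_eq_sub_of_hasDerivAt hderiv kernel_int]
  congr 1
  field_simp
  ring

theorem lintegral_scaleMeasure {a R : ℝ} (ha : 0 < a) (haR : a ≤ R) :
    ∫⁻ s, ENNReal.ofReal (s - a) ∂(scaleMeasure R) =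
      ENNReal.ofReal (Real.log R - Real.log a) := by
  have hR : 0 < R := ha.trans_le haR
  have support_subset : (fun s => ENNReal.ofReal ((s ^ 2)⁻¹ * (s - a))).support ⊆ Set.Ioi a :=
    fun s hs => by
      by_contra h
      exact hs <| ENNReal.ofReal_of_nonpos <|
        mul_nonpos_of_nonneg_of_nonpos (by positivity) (by simpa using h)
  have inter_eq : Set.Ioi a ∩ Set.Ioc 0 R = Set.Ioc a R := by
    ext s
    exact ⟨fun h => ⟨h.1, h.2.2⟩, fun h => ⟨h.1, ha.trans h.1, h.2⟩⟩
  have hcont : ∫⁻ s, ENNReal.ofReal (s - a)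
      ∂((volume.restrict (Set.Ioc 0 R)).withDensity fun s => ENNReal.ofReal (s ^ 2)⁻¹) =
        ENNReal.ofReal (Real.log R - Real.log a - (1 - a / R)) := by
    rw [lintegral_withDensity_eq_lintegral_mul _ (by fun_prop) (by fun_prop),
      ← setLIntegral_inv_sq_mul_sub ha haR, ← inter_eq,
      ← Measure.restrict_restrict measurableSet_Ioi,
      setLIntegral_eq_of_support_subset support_subset]
    exact lintegral_congr fun s => (ENNReal.ofReal_mul (by positivity)).symm
  have hatom : ENNReal.ofReal R⁻¹ * ENNReal.ofReal (R - a) = ENNReal.ofReal (1 - a / R) := by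
    rw [← ENNReal.ofReal_mul (by positivity)]
    congr 1
    field_simp
  have hlog : Real.log a - Real.log R ≤ a / R - 1 :=
    Real.log_div ha.ne' hR.ne' ▸ Real.log_le_sub_one_of_pos (div_pos ha hR)
  rw [scaleMeasure, lintegral_add_measure, hcont, lintegral_smul_measure, lintegral_dirac,
    smul_eq_mul, hatom, ← ENNReal.ofReal_add (by linarith)
      (sub_nonneg.2 (div_le_one_of_le₀ haR hR.le)), sub_add_cancel]

theorem measurableSet_window : MeasurableSet {q : (ℝ × ℝ) × ℝ | q.2 ∈ window q.1} :=
  (measurableSet_le (f := fun q : (ℝ × ℝ) × ℝ => q.1.2) (by fun_prop) measurable_snd).inter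
    (measurableSet_lt (g := fun q : (ℝ × ℝ) × ℝ => q.1.2 + q.1.1) measurable_snd (by fun_prop))

theorem volume_setOf_mem_window (s x y : ℝ) :
    volume {z | x ∈ window (s, z) ∧ y ∈ window (s, z)} = ENNReal.ofReal (s - |x - y|) := by
  have eq_Ioc : {z | x ∈ window (s, z) ∧ y ∈ window (s, z)} =
      Set.Ioc (max x y - s) (min x y) := by
    ext z
    simp only [window, Set.mem_Ico, Set.mem_ofPred_eq, Set.mem_Ioc, sub_lt_iff_lt_add, max_lt_iff,
      le_min_iff]
    tauto
  rw [eq_Ioc, Real.volume_Ioc, ← max_sub_min_eq_abs' x y]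
  congr 1
  ring

theorem overlap_window {x y R : ℝ} (hxy : x ≠ y) (hR : |x - y| ≤ R) :
    overlap ((scaleMeasure R).prod volume) window (x, y) =
      ENNReal.ofReal (logKernel (x, y) + Real.log R) := by
  have hmeas : MeasurableSet {w : ℝ × ℝ | x ∈ window w ∧ y ∈ window w} :=
    (measurableSet_window.preimage measurable_prodMk_right).inter
      (measurableSet_window.preimage measurable_prodMk_right)
  calc overlap ((scaleMeasure R).prod volume) window (x, y)
      = ∫⁻ s, volume {z | x ∈ window (s, z) ∧ y ∈ window (s, z)} ∂(scaleMeasure R) :=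
        Measure.prod_apply hmeas
    _ = ∫⁻ s, ENNReal.ofReal (s - |x - y|) ∂(scaleMeasure R) := by
        simp only [volume_setOf_mem_window]
    _ = ENNReal.ofReal (logKernel (x, y) + Real.log R) := by
        rw [lintegral_scaleMeasure (abs_sub_pos.2 hxy) hR, logKernel, neg_add_eq_sub]

theorem ae_prod_fst_ne_snd {X : Type*} [MeasurableSpace X] [MeasurableEq X] (μ ν : Measure X)
    [SFinite ν] [NullSingletonClass ν] : ∀ᵐ p ∂(μ.prod ν), p.1 ≠ p.2 :=
  (Measure.ae_prod_iff_ae_ae measurableSet_diagonal.compl).2 <| ae_of_all _ fun x =>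
    (Measure.ae_ne ν x).mono fun _ => Ne.symm

theorem isOverlapKernel_logKernel {σ : Measure ℝ} [SFinite σ] [NullSingletonClass σ] {R : ℝ}
    (hR : ∀ᵐ p ∂(σ.prod σ), |p.1 - p.2| ≤ R) :
    IsOverlapKernel ((scaleMeasure R).prod volume) window σ (Real.log R) logKernel where
  measurableSet := measurableSet_window
  nonneg := by
    filter_upwards [hR, ae_prod_fst_ne_snd σ σ] with p hp hne
    have := Real.log_le_log (abs_sub_pos.2 hne) hp
    simp only [logKernel]
    linarith
  overlap_eq := by
    filter_upwards [hR, ae_prod_fst_ne_snd σ σ] with p hp hne using overlap_window hne hp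

end LogKernel

section LogEnergy

theorem eq_of_ae_measure_Ici_eq {μ ν : Measure ℝ} [IsFiniteMeasure μ] [IsFiniteMeasure ν]
    (h : ∀ᵐ z, μ (Set.Ici z) = ν (Set.Ici z)) : μ = ν := by
  refine Measure.ext_of_Ici μ ν fun a => ?_
  obtain ⟨u, hmono, hu, hlim⟩ := (Measure.dense_of_ae h).exists_seq_strictMono_tendsto a
  have Ici_eq_iInter : Set.Ici a = ⋂ n, Set.Ici (u n) := by
    ext x
    simp only [Set.mem_Ici, Set.mem_iInter]
    exact ⟨fun hx n => (hu n).1.le.trans hx, fun hx => le_of_tendsto' hlim hx⟩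
  have tendsto_Ici (α : Measure ℝ) [IsFiniteMeasure α] :
      Tendsto (fun n => α (Set.Ici (u n))) atTop (𝓝 (α (Set.Ici a))) :=
    Ici_eq_iInter ▸ tendsto_measure_iInter_atTop (fun n => measurableSet_Ici.nullMeasurableSet)
      (fun _ _ hij => Set.Ici_subset_Ici.2 (hmono.monotone hij)) ⟨0, measure_ne_top α _⟩
  exact tendsto_nhds_unique (tendsto_Ici μ)
    ((tendsto_Ici ν).congr fun n => (hu n).2.symm)

theorem ae_of_ae_scaleMeasure_prod {R : ℝ} (hR : 0 < R) {P : ℝ × ℝ → Prop}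
    (h : ∀ᵐ w ∂((scaleMeasure R).prod volume), P w) : ∀ᵐ z, P (R, z) := by
  have dirac_ac : Measure.dirac R ≪ scaleMeasure R :=
    (Measure.absolutelyContinuous_smul (ENNReal.ofReal_pos.2 (inv_pos.2 hR)).ne').trans
      (Measure.le_add_left le_rfl).absolutelyContinuous
  have hatom : ∀ᵐ s ∂Measure.dirac R, ∀ᵐ z, P (s, z) :=
    dirac_ac.ae_le (Measure.ae_ae_of_ae_prod h)
  rwa [ae_dirac_eq] at hatom

theorem measure_window_eq_measure_Ici {μ : Measure ℝ} {A B z : ℝ}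
    (hμ : ∀ᵐ x ∂μ, x ∈ Set.Icc A B) (hz : A < z) :
    μ (window (B - A, z)) = μ (Set.Ici z) := by
  refine measure_congr <| hμ.mono fun x hx => propext ⟨fun h => h.1, fun h => ⟨h, ?_⟩⟩
  simp only
  linarith [hx.2]

theorem measure_Ici_eq_one {μ : Measure ℝ} [IsProbabilityMeasure μ] {A B z : ℝ}
    (hμ : ∀ᵐ x ∂μ, x ∈ Set.Icc A B) (hz : z ≤ A) : μ (Set.Ici z) = 1 :=
  prob_compl_eq_zero_iff measurableSet_Ici |>.1 <| hμ.mono fun _ hx => hz.trans hx.1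

theorem energyDist_logKernel_pos {σ : Measure ℝ} [SFinite σ] [NullSingletonClass σ] {A B : ℝ}
    (hAB : A < B) (hσ : ∀ᵐ x ∂σ, x ∈ Set.Icc A B) (hK : Integrable logKernel (σ.prod σ))
    {μ ν : Measure ℝ} [IsProbabilityMeasure μ] [IsProbabilityMeasure ν] (hμ : μ ≤ σ) (hν : ν ≤ σ)
    (hne : μ ≠ ν) : 0 < energyDist logKernel μ ν := by
  by_contra! hdist
  have hdiam : ∀ᵐ p ∂(σ.prod σ), |p.1 - p.2| ≤ B - A := by
    filter_upwards [Measure.quasiMeasurePreserving_fst.ae hσ,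
      Measure.quasiMeasurePreserving_snd.ae hσ] with p h₁ h₂
    exact Real.dist_le_of_mem_Icc h₁ h₂
  have eq_window : ∀ᵐ z, μ (window (B - A, z)) = ν (window (B - A, z)) :=
    ae_of_ae_scaleMeasure_prod (sub_pos.2 hAB) <|
      (isOverlapKernel_logKernel hdiam).ae_measure_eq_of_energyDist_nonpos hK hμ hν hdist
  refine hne <| eq_of_ae_measure_Ici_eq <| eq_window.mono fun z hz => ?_
  have hμ_mem := ae_mono hμ hσ
  have hν_mem := ae_mono hν hσ
  rcases le_or_gt z A with hzA | hAz
  · rw [measure_Ici_eq_one hμ_mem hzA, measure_Ici_eq_one hν_mem hzA]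
  · rwa [measure_window_eq_measure_Ici hμ_mem hAz, measure_window_eq_measure_Ici hν_mem hAz] at hz

end LogEnergy

section ConstraintMeasure

/-- The upper constraint `κ(x) dx` on `[A, B]`, as a measure: the admissible measures are the
probability measures below it. -/
noncomputable def constraintMeasure (A B : ℝ) (κ : ℝ → ℝ) : Measure ℝ :=
  (volume.restrict (Set.Icc A B)).withDensity fun x => ENNReal.ofReal (κ x)

variable {A B : ℝ} {κ : ℝ → ℝ} {μ : Measure ℝ}

instance : SFinite (constraintMeasure A B κ) := by
  unfold constraintMeasure; infer_instance

instance : NullSingletonClass (constraintMeasure A B κ) :=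
  ⟨fun x => withDensity_absolutelyContinuous _ _ (measure_singleton x)⟩

theorem ae_mem_Icc_constraintMeasure : ∀ᵐ x ∂(constraintMeasure A B κ), x ∈ Set.Icc A B :=
  (withDensity_absolutelyContinuous _ _).ae_le (ae_restrict_mem measurableSet_Icc)

theorem isFiniteMeasure_constraintMeasure (hκ : IntegrableOn κ (Set.Icc A B)) :
    IsFiniteMeasure (constraintMeasure A B κ) :=
  isFiniteMeasure_withDensity_ofReal hκ.2

theorem constraintMeasure_univ (hAB : A ≤ B) (hκ : IntegrableOn κ (Set.Icc A B))
    (hκ_nonneg : 0 ≤ᵐ[volume.restrict (Set.Icc A B)] κ) :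
    constraintMeasure A B κ Set.univ = ENNReal.ofReal (∫ x in A..B, κ x) := by
  rw [constraintMeasure, withDensity_apply _ MeasurableSet.univ, Measure.restrict_univ,
    ← ofReal_integral_eq_lintegral_ofReal hκ hκ_nonneg, integral_Icc_eq_integral_Ioc,
    intervalIntegral.integral_of_le hAB]

theorem integral_constraintMeasure (hκ : IntegrableOn κ (Set.Icc A B))
    (hκ_nonneg : 0 ≤ᵐ[volume.restrict (Set.Icc A B)] κ) (f : ℝ → ℝ) :
    ∫ x, f x ∂(constraintMeasure A B κ) = ∫ x in Set.Icc A B, f x * κ x := by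
  rw [constraintMeasure, integral_withDensity_eq_integral_toReal_smul₀
    hκ.aemeasurable.ennreal_ofReal (ae_of_all _ fun _ => ENNReal.ofReal_lt_top)]
  refine integral_congr_ae (hκ_nonneg.mono fun x hx => ?_)
  simp only [ENNReal.toReal_ofReal hx, smul_eq_mul, mul_comm]

theorem constraintMeasure_le_smul_volume {M : ℝ} (hM : ∀ x ∈ Set.Icc A B, κ x ≤ M) :
    constraintMeasure A B κ ≤ ENNReal.ofReal M • volume.restrict (Set.Icc A B) := by
  rw [constraintMeasure, ← withDensity_const]
  exact withDensity_mono <| (ae_restrict_mem measurableSet_Icc).mono fun x hx =>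
    ENNReal.ofReal_le_ofReal (hM x hx)

theorem admissibleClass_iff :
    AdmissibleClass A B κ μ ↔ IsProbabilityMeasure μ ∧ μ ≤ constraintMeasure A B κ := by
  refine and_congr_right fun _ => ⟨fun ⟨hsupp, hac, hdens⟩ => ?_, fun hle => ⟨?_, ?_, ?_⟩⟩
  · calc μ = μ.restrict (Set.Icc A B) := (Measure.restrict_eq_self_of_ae_mem hsupp).symm
      _ = (volume.restrict (Set.Icc A B)).withDensity (μ.rnDeriv volume) := by
        rw [← restrict_withDensity measurableSet_Icc, Measure.withDensity_rnDeriv_eq _ _ hac]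
      _ ≤ constraintMeasure A B κ := withDensity_mono hdens
  · exact ae_mono hle ae_mem_Icc_constraintMeasure
  · exact hle.absolutelyContinuous.trans <|
      (withDensity_absolutelyContinuous _ _).trans Measure.absolutelyContinuous_restrict
  · refine ae_le_of_forall_setLIntegral_le_of_sigmaFinite
      (Measure.measurable_rnDeriv μ volume) fun s hs _ => ?_
    calc ∫⁻ x in s, μ.rnDeriv volume x ∂(volume.restrict (Set.Icc A B))
        ≤ ∫⁻ x in s, μ.rnDeriv volume x :=
          lintegral_mono' (Measure.restrict_mono_measure Measure.restrict_le_self s) le_rfl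
      _ ≤ μ s := Measure.setLIntegral_rnDeriv_le s
      _ ≤ constraintMeasure A B κ s := hle s
      _ = ∫⁻ x in s, ENNReal.ofReal (κ x) ∂(volume.restrict (Set.Icc A B)) :=
        withDensity_apply _ hs

theorem extField_eq_integral_logKernel (hAB : A ≤ B) (hκ : IntegrableOn κ (Set.Icc A B))
    (hκ_nonneg : 0 ≤ᵐ[volume.restrict (Set.Icc A B)] κ) (x : ℝ) :
    extField A B κ x = 2 * ∫ t, logKernel (x, t) ∂(constraintMeasure A B κ) := by
  simp only [integral_constraintMeasure hκ hκ_nonneg, logKernel, neg_mul, integral_neg, extField,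
    intervalIntegral.integral_of_le hAB, integral_Icc_eq_integral_Ioc, mul_neg]

theorem integrable_extField (hAB : A ≤ B) (hκ : IntegrableOn κ (Set.Icc A B))
    (hκ_nonneg : 0 ≤ᵐ[volume.restrict (Set.Icc A B)] κ)
    (hlog : Integrable logKernel ((constraintMeasure A B κ).prod (constraintMeasure A B κ))) :
    Integrable (extField A B κ) (constraintMeasure A B κ) := by
  simpa only [funext (extField_eq_integral_logKernel hAB hκ hκ_nonneg)] using
    hlog.integral_prod_left.const_mul 2

theorem logEnergy_eq_weightedEnergy [SFinite μ] (hlog : Integrable logKernel (μ.prod μ)) :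
    logEnergy A B κ μ = weightedEnergy logKernel (extField A B κ) μ := by
  rw [logEnergy, weightedEnergy, mutualEnergy, integral_prod _ hlog]
  simp only [logKernel, one_div, Real.log_inv]

theorem integrable_logKernel_prod_restrict_Icc (A B : ℝ) :
    Integrable logKernel
      ((volume.restrict (Set.Icc A B)).prod (volume.restrict (Set.Icc A B))) := by
  have one_integrable : Integrable ((Set.Icc A B).indicator fun _ => (1 : ℝ)) :=
    (integrable_indicator_iff measurableSet_Icc).2 (integrableOn_const (by simp))
  have log_integrable : Integrable ((Set.uIcc (A - B) (B - A)).indicator Real.log) :=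
    (integrable_indicator_iff measurableSet_uIcc).2 <|
      (intervalIntegrable_iff' (by simp)).1 intervalIntegral.intervalIntegrable_log'
  rw [Measure.prod_restrict]
  refine (one_integrable.convolution_integrand (ContinuousLinearMap.mul ℝ ℝ)
    log_integrable).neg.restrict.congr ?_
  filter_upwards [ae_restrict_mem (measurableSet_Icc.prod measurableSet_Icc)] with p ⟨hx, hy⟩
  have sub_mem : p.1 - p.2 ∈ Set.uIcc (A - B) (B - A) :=
    Set.Icc_subset_uIcc ⟨by linarith [hx.1, hy.2], by linarith [hx.2, hy.1]⟩
  simp only [Pi.neg_apply, ContinuousLinearMap.mul_apply', Set.indicator_of_mem hy,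
    Set.indicator_of_mem sub_mem, one_mul, logKernel, Real.log_abs]

theorem integrable_logKernel_prod_constraintMeasure {M : ℝ}
    (hM : ∀ x ∈ Set.Icc A B, κ x ≤ M) :
    Integrable logKernel ((constraintMeasure A B κ).prod (constraintMeasure A B κ)) := by
  have le_smul := constraintMeasure_le_smul_volume hM
  refine Integrable.mono_measure ?_ (Measure.prod_mono le_smul le_smul)
  rw [Measure.prod_smul_left, Measure.prod_smul_right]
  exact ((integrable_logKernel_prod_restrict_Icc A B).smul_measure ENNReal.ofReal_ne_top)
    |>.smul_measure ENNReal.ofReal_ne_top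

end ConstraintMeasure

theorem equilibrium_measure_exists_unique_general {A B : ℝ} (hAB : A < B) {κ : ℝ → ℝ}
    (hκ : IntegrableOn κ (Set.Icc A B))
    (hκ_nonneg : 0 ≤ᵐ[volume.restrict (Set.Icc A B)] κ)
    (hlog : Integrable logKernel ((constraintMeasure A B κ).prod (constraintMeasure A B κ)))
    (hmass : 1 ≤ ∫ x in A..B, κ x) :
    ∃! μstar : Measure ℝ, AdmissibleClass A B κ μstar ∧
      ∀ μ : Measure ℝ, AdmissibleClass A B κ μ →
        logEnergy A B κ μstar ≤ logEnergy A B κ μ := by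
  let σ := constraintMeasure A B κ
  have : IsFiniteMeasure σ := isFiniteMeasure_constraintMeasure hκ
  have one_le_σ : 1 ≤ σ Set.univ :=
    constraintMeasure_univ hAB.le hκ hκ_nonneg ▸ ENNReal.one_le_ofReal.2 hmass
  have energy_eq {μ : Measure ℝ} [SFinite μ] (hμ : μ ≤ σ) :
      logEnergy A B κ μ = weightedEnergy logKernel (extField A B κ) μ :=
    logEnergy_eq_weightedEnergy (integrable_prod_of_le hlog hμ hμ)
  obtain ⟨μ, ⟨hμ, hmin⟩, huniq⟩ := existsUnique_isMinOn_weightedEnergy one_le_σ logKernel_swap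
    hlog (integrable_extField hAB.le hκ hκ_nonneg hlog) fun α hα β hβ hne =>
      energyDist_logKernel_pos hAB ae_mem_Icc_constraintMeasure hlog hα hβ
        (Subtype.coe_injective.ne hne)
  simp only [admissibleClass_iff]
  refine ⟨μ, ⟨⟨inferInstance, hμ⟩, fun ν ⟨_, hν⟩ => ?_⟩, fun ν ⟨⟨_, hν⟩, hνmin⟩ => ?_⟩
  · calc logEnergy A B κ μ = weightedEnergy logKernel (extField A B κ) μ := energy_eq hμ
      _ ≤ weightedEnergy logKernel (extField A B κ) ν := hmin (a := ⟨ν, inferInstance⟩) hν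
      _ = logEnergy A B κ ν := (energy_eq hν).symm
  · refine congrArg Subtype.val (huniq ⟨ν, inferInstance⟩ ⟨hν, fun α hα => ?_⟩)
    calc weightedEnergy logKernel (extField A B κ) ν = logEnergy A B κ ν := (energy_eq hν).symm
      _ ≤ logEnergy A B κ α := hνmin α ⟨inferInstance, hα⟩
      _ = weightedEnergy logKernel (extField A B κ) α := energy_eq hα

/-- **Existence and uniqueness of the constrained equilibrium measure.**
Let `0 < A < B` and let `κ` be real-analytic and strictly positive on an open set
containing `[A,B]` with `∫_A^B κ = 2`.  Then there exists a unique measure `μ*` in the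
admissible class `𝔄` minimizing the weighted logarithmic energy `I_V`: any minimizer
in `𝔄` (in particular any `μ ∈ 𝔄` with `I_V[μ] = I_V[μ*]`) equals `μ*`. -/
theorem equilibrium_measure_exists_unique
    (A B : ℝ) (hA : 0 < A) (hAB : A < B)
    (κ : ℝ → ℝ)
    (hκ : ∃ U : Set ℝ, IsOpen U ∧ Set.Icc A B ⊆ U ∧
      ∀ x ∈ U, AnalyticAt ℝ κ x ∧ 0 < κ x)
    (hnorm : ∫ x in A..B, κ x = 2) :
    ∃! μstar : Measure ℝ, AdmissibleClass A B κ μstar ∧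
      ∀ μ : Measure ℝ, AdmissibleClass A B κ μ →
        logEnergy A B κ μstar ≤ logEnergy A B κ μ := by
  obtain ⟨U, -, hIU, hU⟩ := hκ
  have hcont : ContinuousOn κ (Set.Icc A B) := fun x hx =>
    (hU x (hIU hx)).1.continuousAt.continuousWithinAt
  obtain ⟨M, hM⟩ := isCompact_Icc.bddAbove_image hcont
  exact equilibrium_measure_exists_unique_general hAB (hcont.integrableOn_compact isCompact_Icc)
    ((ae_restrict_mem measurableSet_Icc).mono fun x hx => (hU x (hIU hx)).2.le)
    (integrable_logKernel_prod_constraintMeasure fun x hx => hM (Set.mem_image_of_mem κ hx))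
    (hnorm ▸ one_le_two)
end

section
/- Let μ be a Borel probability measure on [A,B] ⊂ (0,∞) that is absolutely continuous with respect to Lebesgue measure with bounded density, and define g(ζ) = ∫_{[A,B]} log(ζ − x) dμ(x) for Im ζ ≠ 0, using the principal branch of the logarithm. Then for every x ∈ (A,B): (i) lim_{ε→0+} [g(x + iε) − g(x − iε)] = 2πi·μ([x,B]); (ii) lim_{ε→0+} [g(x + iε) + g(x − iε)] = 2·∫_{[A,B]} log|x − t| dμ(t). -/
open MeasureTheory Filter Topology Complex

/-!
On the closed upper half-plane the principal logarithm is continuous away from `0`, and its value at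
a real `y ≠ 0` is `log |y|`, plus `π * I` if `y < 0`. As `|log ‖y + ε * I‖| ≤ |log |y|| + log 2` for
`0 < ε ≤ 1`, dominated convergence gives the limit of `g (x + ε * I)`, namely
`∫ log |x - t| dμ + π * I * μ [x, ∞)`. The symmetry `g (conj ζ) = conj (g ζ)` turns this into the
limit from below. The two limits thus differ by `2 * I` times the imaginary part of the first and
add up to twice its real part.
-/

open scoped ComplexConjugate

theorem continuousWithinAt_clog_im_nonneg {z : ℂ} (hz : z ≠ 0) :
    ContinuousWithinAt Complex.log {w | 0 ≤ w.im} z := by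
  by_cases hslit : z ∈ slitPlane
  · exact (continuousAt_clog hslit).continuousWithinAt
  · rw [mem_slitPlane_iff, not_or, not_lt, not_not] at hslit
    obtain ⟨hre, him⟩ := hslit
    have hre_ne : z.re ≠ 0 := fun h => hz (Complex.ext h him)
    exact continuousWithinAt_log_of_re_neg_of_im_zero (hre.lt_of_ne hre_ne) him

theorem tendsto_clog_ofReal_add_mul_I {y : ℝ} (hy : y ≠ 0) :
    Tendsto (fun ε : ℝ => Complex.log (y + ε * I)) (𝓝[>] 0) (𝓝 (Complex.log y)) := by
  have hpath : Tendsto (fun ε : ℝ => (y + ε * I : ℂ)) (𝓝[>] 0) (𝓝 y) := by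
    refine tendsto_nhdsWithin_of_tendsto_nhds (Continuous.tendsto' ?_ _ _ (by simp))
    fun_prop
  have him : ∀ᶠ ε : ℝ in 𝓝[>] 0, (y + ε * I : ℂ) ∈ {w : ℂ | 0 ≤ w.im} := by
    filter_upwards [self_mem_nhdsWithin] with ε hε
    simpa using le_of_lt hε
  exact (continuousWithinAt_clog_im_nonneg (ofReal_ne_zero.mpr hy)).tendsto.comp
    (tendsto_nhdsWithin_iff.mpr ⟨hpath, him⟩)

theorem clog_ofReal (y : ℝ) :
    Complex.log y = (Real.log |y| : ℝ) + (Set.Iio 0).indicator (fun _ => (Real.pi * I : ℂ)) y := by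
  rw [Complex.log, norm_real, Real.norm_eq_abs]
  rcases lt_or_ge y 0 with hy | hy
  · simp [arg_ofReal_of_neg hy, hy]
  · simp [arg_ofReal_of_nonneg hy, hy]

theorem abs_log_le_abs_log_add_log_two {a r : ℝ} (ha : 0 < a) (har : a ≤ r) (hra : r ≤ a + 1) :
    |Real.log r| ≤ |Real.log a| + Real.log 2 := by
  have hlower : Real.log a ≤ Real.log r := Real.log_le_log ha har
  have hupper : Real.log r ≤ |Real.log a| + Real.log 2 :=
    calc Real.log r ≤ Real.posLog (a + 1) :=
          (Real.log_le_log (ha.trans_le har) hra).trans (le_max_right _ _)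
      _ ≤ Real.log 2 + Real.posLog a + Real.posLog 1 := Real.posLog_add
      _ ≤ |Real.log a| + Real.log 2 := by
          have : Real.posLog a ≤ |Real.log a| := max_le (abs_nonneg _) (le_abs_self _)
          rw [Real.posLog_one]
          linarith
  have hlog_two : 0 < Real.log 2 := Real.log_pos one_lt_two
  exact abs_le.mpr ⟨by linarith [neg_abs_le (Real.log a)], hupper⟩

theorem norm_clog_ofReal_add_mul_I_le {y ε : ℝ} (hy : y ≠ 0) (hε : |ε| ≤ 1) :
    ‖Complex.log (y + ε * I)‖ ≤ |Real.log (|y|)| + Real.log 2 + Real.pi := by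
  have hlower : |y| ≤ ‖(y + ε * I : ℂ)‖ := by
    simpa using abs_re_le_norm (y + ε * I : ℂ)
  have hupper : ‖(y + ε * I : ℂ)‖ ≤ |y| + 1 :=
    calc ‖(y + ε * I : ℂ)‖ ≤ |y| + |ε| := by simpa using norm_add_le (y : ℂ) (ε * I)
      _ ≤ |y| + 1 := by gcongr
  calc ‖Complex.log (y + ε * I)‖
      ≤ |Real.log ‖(y + ε * I : ℂ)‖| + |arg (y + ε * I)| := by
        simpa only [log_re, log_im] using norm_le_abs_re_add_abs_im (Complex.log (y + ε * I))
    _ ≤ |Real.log (|y|)| + Real.log 2 + Real.pi :=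
        add_le_add (abs_log_le_abs_log_add_log_two (abs_pos.mpr hy) hlower hupper) (abs_arg_le_pi _)

theorem integrable_withDensity_of_ae_le {α E : Type*} [MeasurableSpace α] [NormedAddCommGroup E]
    {μ : Measure α} {f : α → E} (hf : Integrable f μ) {ρ : α → ENNReal} {c : ENNReal} (hc : c ≠ ⊤)
    (hρ : ∀ᵐ t ∂μ, ρ t ≤ c) : Integrable f (μ.withDensity ρ) := by
  have hle : μ.withDensity ρ ≤ c • μ := withDensity_const (μ := μ) c ▸ withDensity_mono hρ
  exact (hf.smul_measure hc).mono_measure hle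

theorem integrableOn_log_abs_sub (x a b : ℝ) :
    IntegrableOn (fun t => Real.log |x - t|) (Set.Icc a b) := by
  have h : IntervalIntegrable (fun t => Real.log |x - t|) volume a b := by
    simpa using
      (intervalIntegral.intervalIntegrable_log' (a := x - a) (b := x - b)).comp_sub_left x
  exact ((intervalIntegrable_iff' (by simp)).mp h).mono_set Set.Icc_subset_uIcc

/-- The logarithmic transform `ζ ↦ ∫ log (ζ - t) dμ(t)` of a measure on `ℝ`, called the `g`-function
of `μ` in the theory of orthogonal polynomials. It is meant for `ζ` off the real axis. -/
noncomputable def gFunction (μ : Measure ℝ) (ζ : ℂ) : ℂ :=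
  ∫ t : ℝ, Complex.log (ζ - t) ∂μ

theorem gFunction_conj (μ : Measure ℝ) {ζ : ℂ} (hζ : ζ.im ≠ 0) :
    gFunction μ (conj ζ) = conj (gFunction μ ζ) := by
  rw [gFunction, gFunction, ← integral_conj]
  congr with t
  have harg : arg (ζ - t) ≠ Real.pi := fun h => hζ (by simpa using (arg_eq_pi_iff.mp h).2)
  rw [← log_conj _ harg, map_sub, conj_ofReal]

section BoundaryValues

variable {μ : Measure ℝ} [IsFiniteMeasure μ] {x : ℝ}

theorem integral_clog_ofReal_sub (hlog : Integrable (fun t => Real.log |x - t|) μ) :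
    ∫ t : ℝ, Complex.log (x - t) ∂μ =
      (∫ t, Real.log |x - t| ∂μ : ℝ) + μ.real (Set.Ioi x) * (Real.pi * I) := by
  have hvalue (t : ℝ) : Complex.log (x - t) =
      (Real.log |x - t| : ℝ) + (Set.Ioi x).indicator (fun _ => (Real.pi * I : ℂ)) t := by
    rw [← ofReal_sub, clog_ofReal]
    simp [Set.indicator]
  simp_rw [hvalue]
  rw [integral_add hlog.ofReal ((integrable_const _).indicator measurableSet_Ioi),
    integral_complex_ofReal, integral_indicator_const _ measurableSet_Ioi, real_smul]

theorem tendsto_gFunction_add_mul_I (hx : μ {x} = 0)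
    (hlog : Integrable (fun t => Real.log |x - t|) μ) :
    Tendsto (fun ε : ℝ => gFunction μ (x + ε * I)) (𝓝[>] 0)
      (𝓝 ((∫ t, Real.log |x - t| ∂μ : ℝ) + μ.real (Set.Ici x) * (Real.pi * I))) := by
  have hne : ∀ᵐ t ∂μ, x - t ≠ 0 := by
    filter_upwards [measure_eq_zero_iff_ae_notMem.mp hx] with t ht
    exact sub_ne_zero.mpr (Ne.symm ht)
  have hshift (ε t : ℝ) : (x + ε * I - t : ℂ) = (x - t : ℝ) + ε * I := by
    push_cast
    ring
  have hsmall : ∀ᶠ ε : ℝ in 𝓝[>] 0, |ε| ≤ 1 := by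
    filter_upwards [Ioo_mem_nhdsGT one_pos] with ε hε
    exact (abs_of_pos hε.1).trans_le hε.2.le
  have hIci : μ.real (Set.Ici x) = μ.real (Set.Ioi x) :=
    measureReal_congr (Ioi_ae_eq_Ici' hx).symm
  rw [hIci, ← integral_clog_ofReal_sub hlog]
  refine tendsto_integral_filter_of_dominated_convergence
    (fun t => |Real.log (|x - t|)| + Real.log 2 + Real.pi) ?_ ?_ ?_ ?_
  · exact Eventually.of_forall fun ε => Measurable.aestronglyMeasurable (by fun_prop)
  · filter_upwards [hsmall] with ε hε
    filter_upwards [hne] with t ht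
    simpa only [hshift] using norm_clog_ofReal_add_mul_I_le ht hε
  · exact (hlog.abs.add (integrable_const _)).add (integrable_const _)
  · filter_upwards [hne] with t ht
    simpa only [hshift, ofReal_sub] using tendsto_clog_ofReal_add_mul_I ht

theorem tendsto_gFunction_sub_mul_I (hx : μ {x} = 0)
    (hlog : Integrable (fun t => Real.log |x - t|) μ) :
    Tendsto (fun ε : ℝ => gFunction μ (x - ε * I)) (𝓝[>] 0)
      (𝓝 ((∫ t, Real.log |x - t| ∂μ : ℝ) - μ.real (Set.Ici x) * (Real.pi * I))) := by
  have hconj := (continuous_conj.tendsto _).comp (tendsto_gFunction_add_mul_I hx hlog)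
  simp only [map_add, map_mul, conj_ofReal, conj_I, mul_neg, ← sub_eq_add_neg] at hconj
  refine hconj.congr' ?_
  filter_upwards [self_mem_nhdsWithin] with ε hε
  have him : (x + ε * I : ℂ).im ≠ 0 := by simpa using ne_of_gt hε
  simp [← gFunction_conj μ him, sub_eq_add_neg]

theorem g_function_jump_relations_general (hx : μ {x} = 0)
    (hlog : Integrable (fun t => Real.log |x - t|) μ)
    {g : ℂ → ℂ} (hg : ∀ ζ : ℂ, ζ.im ≠ 0 → g ζ = gFunction μ ζ) :
    Tendsto (fun ε : ℝ => g (x + ε * I) - g (x - ε * I)) (𝓝[>] 0)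
        (𝓝 (2 * Real.pi * I * μ.real (Set.Ici x))) ∧
      Tendsto (fun ε : ℝ => g (x + ε * I) + g (x - ε * I)) (𝓝[>] 0)
        (𝓝 (2 * (∫ t, Real.log |x - t| ∂μ : ℝ))) := by
  have habove := (tendsto_gFunction_add_mul_I hx hlog).congr' <| by
    filter_upwards [self_mem_nhdsWithin] with ε hε
    exact (hg _ (by simpa using ne_of_gt hε)).symm
  have hbelow := (tendsto_gFunction_sub_mul_I hx hlog).congr' <| by
    filter_upwards [self_mem_nhdsWithin] with ε hε
    exact (hg _ (by simpa using ne_of_gt hε)).symm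
  constructor
  · convert habove.sub hbelow using 2
    ring
  · convert habove.add hbelow using 2
    ring

end BoundaryValues

/-- **Sokhotski–Plemelj jump relations for the `g`-function.**
Let `0 < A < B` and let `μ` be a Borel probability measure on `[A,B] ⊂ (0,∞)`,
absolutely continuous with bounded density, and let
`g(ζ) = ∫_{[A,B]} log(ζ - x) dμ(x)` (principal branch) for `Im ζ ≠ 0`.  Then for every
`x ∈ (A,B)`:
(i)  `lim_{ε→0+} [g(x + iε) - g(x - iε)] = 2πi·μ([x,B])`;
(ii) `lim_{ε→0+} [g(x + iε) + g(x - iε)] = 2∫_{[A,B]} log|x - t| dμ(t)`. -/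
theorem g_function_jump_relations
    (A B : ℝ) (hA : 0 < A) (hAB : A < B)
    (μ : Measure ℝ) (hprob : IsProbabilityMeasure μ)
    (hsupp : μ (Set.Icc A B)ᶜ = 0)
    (hdens : ∃ (ρ : ℝ → ℝ) (M : ℝ), Measurable ρ ∧ (∀ x, 0 ≤ ρ x ∧ ρ x ≤ M) ∧
      μ = volume.withDensity (fun x => ENNReal.ofReal (ρ x)))
    (g : ℂ → ℂ)
    (hg : ∀ ζ : ℂ, ζ.im ≠ 0 → g ζ = ∫ x in Set.Icc A B, Complex.log (ζ - (x : ℂ)) ∂μ) :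
    ∀ x ∈ Set.Ioo A B,
      Tendsto (fun ε : ℝ => g ((x : ℂ) + ε * Complex.I) - g ((x : ℂ) - ε * Complex.I))
        (𝓝[>] 0)
        (𝓝 (2 * Real.pi * Complex.I * ((μ (Set.Icc x B)).toReal : ℂ))) ∧
      Tendsto (fun ε : ℝ => g ((x : ℂ) + ε * Complex.I) + g ((x : ℂ) - ε * Complex.I))
        (𝓝[>] 0)
        (𝓝 (2 * ((∫ t in Set.Icc A B, Real.log |x - t| ∂μ : ℝ) : ℂ))) := by
  intro x hx
  obtain ⟨ρ, M, -, hρ, rfl⟩ := hdens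
  set μ := volume.withDensity fun t => ENNReal.ofReal (ρ t)
  have hatom : μ.restrict (Set.Icc A B) {x} = 0 :=
    (Measure.absolutelyContinuous_of_le Measure.restrict_le_self).trans
      (withDensity_absolutelyContinuous _ _) Real.volume_singleton
  have hlog : IntegrableOn (fun t => Real.log |x - t|) (Set.Icc A B) μ := by
    rw [IntegrableOn, restrict_withDensity measurableSet_Icc]
    exact integrable_withDensity_of_ae_le (integrableOn_log_abs_sub x A B) ENNReal.ofReal_ne_top
      (ae_of_all _ fun t => ENNReal.ofReal_le_ofReal (hρ t).2)
  have hmass : (μ.restrict (Set.Icc A B)).real (Set.Ici x) = (μ (Set.Icc x B)).toReal := by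
    rw [measureReal_restrict_apply measurableSet_Ici, ← Set.Ici_inter_Iic, ← Set.inter_assoc,
      Set.Ici_inter_Ici, sup_eq_left.mpr hx.1.le, Set.Ici_inter_Iic, measureReal_def]
  exact hmass ▸ g_function_jump_relations_general hatom hlog hg
end
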